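/- Let k be a field of characteristic zero, let V ⊂ P_k^n × P_k^m be a reduced closed subscheme, and let (d,e) ∈ N² with d,e ≠ 0. Let f_U be a bihomogeneous form of bidegree (d,e) whose coefficients U_{α,β} are indeterminates. Then there exists a nonempty open subset Ω ⊂ Spec(k[U_{α,β}]) such that for every point p ∈ Ω, with residue field k_p and corresponding form f_p, the scheme V ∩ Z(f_p) ⊆ P^n_{k_p} × P^m_{k_p} is reduced of dimension dim V − 1, unless dim V = 0, in which case V ∩ Z(f_p) = ∅. -/

import Mathlib

open MvPolynomial Pointwise

noncomputable section

/-- The bigraded polynomial ring `S = k[x_0,…,x_n,y_0,…,y_m]`. -/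
abbrev PolyS (k : Type) [Field k] (n m : ℕ) := MvPolynomial (Fin (n+1) ⊕ Fin (m+1)) k

/-- The bigrading weights: `deg x_i = (1,0)`, `deg y_j = (0,1)`. -/
def wt (n m : ℕ) : (Fin (n+1) ⊕ Fin (m+1)) → ℤ × ℤ :=
  Sum.elim (fun _ => (1,0)) (fun _ => (0,1))

/-- The bigraded piece of `S` in bidegree `γ`. -/
def grad (k : Type) [Field k] (n m : ℕ) (γ : ℤ × ℤ) : Submodule k (PolyS k n m) :=
  weightedHomogeneousSubmodule k (wt n m) γ

/-- `B₁ = (x_0,…,x_n)`. -/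
def Bone (k : Type) [Field k] (n m : ℕ) : Ideal (PolyS k n m) :=
  Ideal.span (Set.range fun i => X (Sum.inl i))

/-- `B₂ = (y_0,…,y_m)`. -/
def Btwo (k : Type) [Field k] (n m : ℕ) : Ideal (PolyS k n m) :=
  Ideal.span (Set.range fun j => X (Sum.inr j))

/-- `B = B₁ ⬝ B₂`, the irrelevant ideal of `ℙⁿ × ℙᵐ`. -/
def Birr (k : Type) [Field k] (n m : ℕ) : Ideal (PolyS k n m) := Bone k n m * Btwo k n m

/-- The saturation `I : C^∞` of an ideal. -/
def satIdeal {k : Type} [Field k] {n m : ℕ} (I C : Ideal (PolyS k n m)) :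
    Ideal (PolyS k n m) :=
  ⨆ t : ℕ, Submodule.colon I (C ^ t)

/-- The bidegree-`γ` piece of `S ⧸ I`, as a `k`-subspace. -/
def quotPiece (k : Type) [Field k] (n m : ℕ) (I : Ideal (PolyS k n m)) (γ : ℤ × ℤ) :
    Submodule k ((PolyS k n m) ⧸ I) :=
  (grad k n m γ).map (Ideal.Quotient.mkₐ k I).toLinearMap

/-- The bigraded Hilbert function of `S ⧸ I`. -/
def HFq (k : Type) [Field k] (n m : ℕ) (I : Ideal (PolyS k n m)) (γ : ℤ × ℤ) : ℕ :=
  Module.finrank k (quotPiece k n m I γ)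

/-- The bigraded Hilbert function of the subscheme of `ℙⁿ × ℙᵐ` defined by `I`, i.e. the
Hilbert function of `S ⧸ (I : B^∞)`. -/
def HFV (k : Type) [Field k] (n m : ℕ) (I : Ideal (PolyS k n m)) (γ : ℤ × ℤ) : ℕ :=
  HFq k n m (satIdeal I (Birr k n m)) γ

/-- `codim V = r`, encoded as: the cone over `V` (i.e. `Spec` of `S` modulo the saturation
of `I`) has Krull dimension `n + m + 2 - r`. -/
def CodimEq (k : Type) [Field k] (n m : ℕ) (I : Ideal (PolyS k n m)) (r : ℕ) : Prop :=
  ringKrullDim ((PolyS k n m) ⧸ satIdeal I (Birr k n m)) = ((n + m + 2 - r : ℕ) : WithBot ℕ∞)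

/-- The Hilbert function of `S` itself. -/
def HFS (k : Type) [Field k] (n m : ℕ) (γ : ℤ × ℤ) : ℕ :=
  Module.finrank k (grad k n m γ)

/-- Integer binomial coefficient `C(x,t)`, with the Hilbert-function convention that it
vanishes for `x < 0`. -/
def ibin (x : ℤ) (t : ℕ) : ℤ := if x < 0 then 0 else (x.toNat.choose t : ℤ)

/-- `χ(a,b) = Σᵢ (−1)^i C(n+m,i) C(n+a−id,n) C(m+b−ie,m)`. -/
def chiCI (n m d e : ℕ) (γ : ℤ × ℤ) : ℤ :=
  ∑ i ∈ Finset.range (n + m + 1),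
    (-1) ^ i * (Nat.choose (n + m) i : ℤ) *
      ibin ((n : ℤ) + γ.1 - i * d) n * ibin ((m : ℤ) + γ.2 - i * e) m

/-- `v_i = i·(d,e) − (n+1,0)`. -/
def vpt (n d e : ℕ) (i : ℤ) : ℤ × ℤ := (i * d - (n + 1), i * e)

/-- `w_i = i·(d,e) − (0,m+1)`. -/
def wpt (m d e : ℕ) (i : ℤ) : ℤ × ℤ := (i * d, i * e - (m + 1))

/-- `σ = (n+m)·(d,e) − (n+1,m+1)`. -/
def sigmaPt (n m d e : ℕ) : ℤ × ℤ :=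
  ((n + m : ℤ) * d - (n + 1), (n + m : ℤ) * e - (m + 1))

/-- `Γ_i = Supp(H^{n+1}_{B₁}(K_{n+i}(f,S))) ∪ Supp(H^{m+1}_{B₂}(K_{m+i}(f,S)))`, computed
explicitly: for `0 ≤ n+i ≤ n+m` the first support is `v_{n+i} + (−ℕ,ℕ)`, and for
`0 ≤ m+i ≤ n+m` the second support is `w_{m+i} + (ℕ,−ℕ)`; otherwise the Koszul terms
vanish. -/
def GammaSet (n m d e : ℕ) (i : ℤ) : Set (ℤ × ℤ) :=
  {γ | (0 ≤ (n : ℤ) + i ∧ (n : ℤ) + i ≤ (n : ℤ) + m ∧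
          γ.1 ≤ ((n : ℤ) + i) * d - ((n : ℤ) + 1) ∧ ((n : ℤ) + i) * e ≤ γ.2) ∨
       (0 ≤ (m : ℤ) + i ∧ (m : ℤ) + i ≤ (n : ℤ) + m ∧
          ((m : ℤ) + i) * d ≤ γ.1 ∧ γ.2 ≤ ((m : ℤ) + i) * e - ((m : ℤ) + 1))}

/-- `V = Proj(S/I)` is a complete intersection scheme of points in `ℙⁿ × ℙᵐ` defined by
`n+m` forms of bidegree `(d,e)`: `I` is generated by the `f i`, each `f i` is bihomogeneous
of bidegree `(d,e)`, and `V` is zero-dimensional (codimension `n+m`). -/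
def IsCIPoints (k : Type) [Field k] (n m d e : ℕ) (f : Fin (n + m) → PolyS k n m)
    (I : Ideal (PolyS k n m)) : Prop :=
  (∀ i, f i ∈ grad k n m ((d : ℤ), (e : ℤ))) ∧ I = Ideal.span (Set.range f) ∧
    CodimEq k n m I (n + m)

open scoped TensorProduct

/-! Let `R` be the coordinate ring of the affine cone over `V`, localized at some `x_i y_j`. There
the monomial `x_i ^ d * y_j ^ e` is a unit, so the universal form `∑ t, a t • U t` can be solved for
its coefficient, and `R[U]` modulo the universal form is a polynomial ring over `R`, hence reduced.
In characteristic zero such a `k[U]`-algebra is smooth on a dense open subset of its generic fibre;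
inverting a suitable `F ∈ k[U]`, generic freeness makes the equation of the complement a
nonzerodivisor on every fibre, so that all fibres over `F ≠ 0` are reduced.

Generic freeness also keeps the universal form a nonzerodivisor on the fibres, so the dimension
drops by at least one. When `1 ≤ dim V` it drops by exactly one: the ratios of the monomials of
bidegree `(d, e)` together with `x_i` and `y_j` generate the function field of a component of the
cone, so some ratio is transcendental over `k`. Hence the linear form in the remaining `U t` which
replaces the eliminated coefficient is transcendental over them, and `k[U]` still embeds into the
polynomial ring over that component; counting transcendence degrees over `k[U]` gives the bound.

If `dim V = 0`, the cone over the section has dimension at most `1`, so the images of `x_i` and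
`y_j` are algebraically dependent. A bihomogeneous component of the relation is a monomial in `x_i`
and `y_j` which vanishes on the cone, so the section misses the chart `x_i y_j ≠ 0`. -/

/-! ### Krull dimension of algebras of finite type over a field -/

theorem ringKrullDim_le_of_isIntegral (A B : Type*) [CommRing A] [CommRing B] [Algebra A B]
    [Algebra.IsIntegral A B] : ringKrullDim B ≤ ringKrullDim A :=
  Order.krullDim_le_of_strictMono (PrimeSpectrum.comap (algebraMap A B)) fun _ _ hpq ↦
    Ideal.IsIntegral.comap_lt_comap hpq

theorem ringKrullDim_eq_of_isIntegral (A B : Type*) [CommRing A] [CommRing B] [Algebra A B]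
    [Algebra.IsIntegral A B] [FaithfulSMul A B] : ringKrullDim B = ringKrullDim A := by
  refine le_antisymm (ringKrullDim_le_of_isIntegral A B) (iSup_le fun l ↦ ?_)
  obtain ⟨P, hP⟩ := Algebra.IsIntegral.comap_surjective A B l.head
  have : P.asIdeal.LiesOver l.head.asIdeal := ⟨by rw [← hP]; rfl⟩
  obtain ⟨L, hL, -⟩ := Ideal.exists_ltSeries_of_hasGoingUp l P.asIdeal
  exact hL ▸ Order.LTSeries.length_le_krullDim L

theorem ringKrullDim_mvPolynomial_fin (K : Type*) [Field K] (s : ℕ) :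
    ringKrullDim (MvPolynomial (Fin s) K) = s := by
  rw [MvPolynomial.ringKrullDim_of_isNoetherianRing, ringKrullDim_eq_zero_of_field]
  simp

theorem exists_algebraicIndependent_isIntegral (K R : Type*) [Field K] [CommRing R] [Algebra K R]
    [Algebra.FiniteType K R] [Nontrivial R] :
    ∃ (s : ℕ) (x : Fin s → R), AlgebraicIndependent K x ∧ (aeval (R := K) x).IsIntegral ∧
      ringKrullDim R = s := by
  obtain ⟨s, g, hg, hi⟩ := exists_integral_inj_algHom_of_fg K R
  have hx : g = aeval fun i ↦ g (X i) := aeval_unique g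
  refine ⟨s, fun i ↦ g (X i), by rwa [AlgebraicIndependent, ← hx], by rwa [← hx], ?_⟩
  let := g.toRingHom.toAlgebra
  have : Algebra.IsIntegral (MvPolynomial (Fin s) K) R := ⟨hi⟩
  have : FaithfulSMul (MvPolynomial (Fin s) K) R :=
    (faithfulSMul_iff_algebraMap_injective _ _).mpr hg
  rw [ringKrullDim_eq_of_isIntegral (MvPolynomial (Fin s) K) R, ringKrullDim_mvPolynomial_fin]

theorem exists_trdeg_eq_ringKrullDim_eq (K R : Type*) [Field K] [CommRing R] [IsDomain R]
    [Algebra K R] [Algebra.FiniteType K R] :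
    ∃ s : ℕ, Algebra.trdeg K R = s ∧ ringKrullDim R = s := by
  obtain ⟨s, x, hx, hi, hs⟩ := exists_algebraicIndependent_isIntegral K R
  have halg : Algebra.IsAlgebraic (Algebra.adjoin K (Set.range x)) R := by
    let := (aeval (R := K) x).toAlgebra
    refine ⟨fun z ↦ IsIntegral.isAlgebraic ?_⟩
    exact IsIntegral.map_of_comp_eq (hx.aevalEquiv : MvPolynomial (Fin s) K →+* _) (RingHom.id R)
      (by ext <;> simp [RingHom.algebraMap_toAlgebra]) (hi z)
  have hbasis := (hx.isTranscendenceBasis_iff_isAlgebraic.mpr halg).lift_cardinalMk_eq_trdeg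
  exact ⟨s, by simpa using hbasis.symm, hs⟩

theorem exists_isPrime_injective_quotientMk_comp {E R : Type*} [CommRing E] [IsDomain E]
    [CommRing R] (g : E →+* R) (hg : Function.Injective g) :
    ∃ P : Ideal R, P.IsPrime ∧ Function.Injective ((Ideal.Quotient.mk P).comp g) := by
  obtain ⟨P, hP, hcomap⟩ := Ideal.exists_comap_eq_of_mem_minimalPrimes_of_injective hg ⊥
    (by rw [IsDomain.minimalPrimes_eq_singleton_bot]; rfl)
  refine ⟨P, hP, ?_⟩
  rw [RingHom.injective_iff_ker_eq_bot, ← hcomap, ← RingHom.comap_ker, Ideal.mk_ker]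

theorem le_ringKrullDim_of_algebraicIndependent {K R : Type*} [Field K] [CommRing R] [Algebra K R]
    [Algebra.FiniteType K R] {r : ℕ} {x : Fin r → R} (hx : AlgebraicIndependent K x) :
    r ≤ ringKrullDim R := by
  obtain ⟨P, hP, hinj⟩ := exists_isPrime_injective_quotientMk_comp (aeval (R := K) x).toRingHom hx
  have hxP : AlgebraicIndependent K fun i ↦ Ideal.Quotient.mkₐ K P (x i) := by
    rw [AlgebraicIndependent, ← comp_aeval]
    exact hinj
  obtain ⟨s, htrdeg, hs⟩ := exists_trdeg_eq_ringKrullDim_eq K (R ⧸ P)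
  have hrs : (r : Cardinal.{0}) ≤ s := by simpa [htrdeg] using hxP.lift_cardinalMk_le_trdeg
  calc (r : WithBot ℕ∞) ≤ s := mod_cast hrs
    _ = ringKrullDim (R ⧸ P) := hs.symm
    _ ≤ ringKrullDim R := ringKrullDim_quotient_le P

theorem ringKrullDim_tensorProduct_le (k K R : Type*) [Field k] [Field K] [Algebra k K]
    [CommRing R] [Algebra k R] [Algebra.FiniteType k R] :
    ringKrullDim (K ⊗[k] R) ≤ ringKrullDim R := by
  nontriviality R
  obtain ⟨s, x, -, hi, hs⟩ := exists_algebraicIndependent_isIntegral k R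
  let := (aeval (R := k) x).toAlgebra
  let := (aeval (R := K) fun i ↦ (1 : K) ⊗ₜ[k] x i).toAlgebra
  have : Algebra.IsIntegral (MvPolynomial (Fin s) K) (K ⊗[k] R) := by
    refine ⟨fun z ↦ ?_⟩
    induction z with
    | zero => exact isIntegral_zero
    | add y z hy hz => exact hy.add hz
    | tmul c z =>
      rw [← mul_one c, ← one_mul z, ← Algebra.TensorProduct.tmul_mul_tmul]
      refine .mul ?_ ?_
      · have hc : algebraMap (MvPolynomial (Fin s) K) (K ⊗[k] R) (C c) = c ⊗ₜ 1 :=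
          aeval_C _ c
        exact hc ▸ isIntegral_algebraMap
      · exact IsIntegral.map_of_comp_eq (MvPolynomial.map (algebraMap k K))
          (Algebra.TensorProduct.includeRight : R →ₐ[k] K ⊗[k] R).toRingHom
          (by ext <;> simp [RingHom.algebraMap_toAlgebra]) (hi z)
  calc ringKrullDim (K ⊗[k] R) ≤ ringKrullDim (MvPolynomial (Fin s) K) :=
        ringKrullDim_le_of_isIntegral _ _
    _ = ringKrullDim R := by rw [ringKrullDim_mvPolynomial_fin, hs]

theorem ringKrullDim_le_of_forall_exists_isUnit_mul {P Q : Type*} [CommRing P] [CommRing Q]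
    (θ : P →+* Q) (hθ : ∀ z, ∃ u, IsUnit u ∧ u * z ∈ θ.range) :
    ringKrullDim Q ≤ ringKrullDim P := by
  refine Order.krullDim_le_of_strictMono (PrimeSpectrum.comap θ) fun p q hpq ↦ ?_
  have hpq' : p.asIdeal < q.asIdeal := hpq
  obtain ⟨hle, z, hzq, hzp⟩ := SetLike.lt_iff_le_and_exists.mp hpq'
  obtain ⟨u, hu, a, ha⟩ := hθ z
  change p.asIdeal.comap θ < q.asIdeal.comap θ
  refine SetLike.lt_iff_le_and_exists.mpr ⟨Ideal.comap_mono hle, a, ?_, fun hap ↦ hzp ?_⟩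
  · exact (ha ▸ q.asIdeal.mul_mem_left u hzq : θ a ∈ q.asIdeal)
  · exact (p.asIdeal.unit_mul_mem_iff_mem hu).mp (ha ▸ hap : u * z ∈ p.asIdeal)

theorem ringKrullDim_quotient_span_singleton_le {R : Type*} [CommRing R] {f : R}
    (hf : f ∈ nonZeroDivisors R) {s : ℕ} (hs : ringKrullDim R ≤ (s + 1 : ℕ)) :
    ringKrullDim (R ⧸ Ideal.span {f}) ≤ s := by
  have h := (ringKrullDim_quotient_succ_le_of_nonZeroDivisor hf).trans hs
  generalize ringKrullDim (R ⧸ Ideal.span {f}) = x at h ⊢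
  cases x with
  | bot => exact bot_le
  | coe a =>
    have hle : a + 1 ≤ (s : ℕ∞) + 1 := by exact_mod_cast h
    exact_mod_cast (ENat.add_le_add_iff_right ENat.one_ne_top).mp hle

/-! ### Generic properties of the fibres of an algebra of finite type -/

theorem free_quotient_of_isUnit_leadingCoeff {σ R : Type*} [CommRing R] (mo : MonomialOrder σ)
    (J : Ideal (MvPolynomial σ R))
    (hJ : ∀ g ∈ J, g ≠ 0 → ∃ b ∈ J, IsUnit (mo.leadingCoeff b) ∧ mo.degree b ≤ mo.degree g) :
    Module.Free R (MvPolynomial σ R ⧸ J) := by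
  let W : Set (σ →₀ ℕ) := {w | ∃ g ∈ J, g ≠ 0 ∧ mo.degree g = w}
  let standard := restrictSupport R Wᶜ
  let toQuotient : standard →ₗ[R] MvPolynomial σ R ⧸ J :=
    (Ideal.Quotient.mkₐ R J).toLinearMap ∘ₗ standard.subtype
  have h_injective : Function.Injective toQuotient := by
    refine (injective_iff_map_eq_zero _).mpr fun ⟨r, hr⟩ hr0 ↦ Subtype.ext ?_
    by_contra hne
    exact (mem_restrictSupport_iff R).mp hr (mo.degree_mem_support hne)
      ⟨r, Ideal.Quotient.eq_zero_iff_mem.mp hr0, hne, rfl⟩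
  have h_surjective : Function.Surjective toQuotient := by
    intro z
    obtain ⟨p, rfl⟩ := Ideal.Quotient.mk_surjective z
    obtain ⟨q, r, hp, -, hr⟩ :=
      mo.div_set (B := {b | b ∈ J ∧ IsUnit (mo.leadingCoeff b)}) (fun b hb ↦ hb.2) p
    refine ⟨⟨r, (mem_restrictSupport_iff R).mpr ?_⟩, (Ideal.Quotient.eq.mpr ?_).symm⟩
    · rintro c hc ⟨g, hg, hg0, rfl⟩
      obtain ⟨b, hb, hbu, hle⟩ := hJ g hg hg0
      exact hr _ hc b ⟨hb, hbu⟩ hle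
    · rw [hp, Submodule.subtype_apply, add_sub_cancel_right, Finsupp.linearCombination_apply]
      exact J.sum_mem fun b _ ↦ J.mul_mem_left _ b.2.1
  have : Module.Free R standard := .of_basis (basisRestrictSupport R Wᶜ)
  exact .of_equiv (LinearEquiv.ofBijective toQuotient ⟨h_injective, h_surjective⟩)

theorem exists_finset_forall_degree_le {σ R : Type*} [Finite σ] [CommRing R] (mo : MonomialOrder σ)
    (J : Ideal (MvPolynomial σ R)) :
    ∃ G : Finset (MvPolynomial σ R), (∀ b ∈ G, b ∈ J ∧ b ≠ 0) ∧
      ∀ g ∈ J, g ≠ 0 → ∃ b ∈ G, mo.degree b ≤ mo.degree g := by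
  classical
  let W : Set (σ →₀ ℕ) := {w | ∃ g ∈ J, g ≠ 0 ∧ mo.degree g = w}
  have hfin : {w | Minimal (· ∈ W) w}.Finite :=
    WellQuasiOrderedLE.finite_of_isAntichain (setOfPred_minimal_antichain _)
  choose! g hgJ hg0 hgd using fun (w : σ →₀ ℕ) (hw : w ∈ W) ↦ hw
  refine ⟨hfin.toFinset.image g, fun b hb ↦ ?_, fun p hp hp0 ↦ ?_⟩
  · obtain ⟨w, hw, rfl⟩ := Finset.mem_image.mp hb
    have hwW := (hfin.mem_toFinset.mp hw).prop
    exact ⟨hgJ w hwW, hg0 w hwW⟩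
  · obtain ⟨w, hle, hw⟩ := exists_minimal_le_of_wellFoundedLT (· ∈ W) _ ⟨p, hp, hp0, rfl⟩
    exact ⟨g w, Finset.mem_image_of_mem g (hfin.mem_toFinset.mpr hw), (hgd w hw.prop).trans_le hle⟩

theorem exists_ne_zero_free_quotient_map {σ D : Type*} [Finite σ] [LinearOrder σ]
    [WellFoundedGT σ] [CommRing D] [IsDomain D] (J : Ideal (MvPolynomial σ D)) :
    ∃ F : D, F ≠ 0 ∧ Module.Free (Localization.Away F) (MvPolynomial σ (Localization.Away F) ⧸
      J.map (MvPolynomial.map (algebraMap D (Localization.Away F)))) := by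
  let mo : MonomialOrder σ := MonomialOrder.lex
  obtain ⟨G, hG, hGle⟩ := exists_finset_forall_degree_le mo J
  let F : D := ∏ b ∈ G, mo.leadingCoeff b
  have hF : F ≠ 0 := Finset.prod_ne_zero_iff.mpr fun b hb ↦
    mo.leadingCoeff_ne_zero_iff.mpr (hG b hb).2
  refine ⟨F, hF, free_quotient_of_isUnit_leadingCoeff mo _ fun g hg hg0 ↦ ?_⟩
  set D' := Localization.Away F
  have hinj : Function.Injective (algebraMap D D') :=
    IsLocalization.injective D' (powers_le_nonZeroDivisors_of_noZeroDivisors hF)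
  have hdeg (p : MvPolynomial σ D) : mo.degree (map (algebraMap D D') p) = mo.degree p := by
    unfold MonomialOrder.degree
    rw [support_map_of_injective _ hinj]
  let := algebraMvPolynomial (σ := σ) (R := D) (S := D')
  obtain ⟨⟨⟨p, hp⟩, ⟨_, a, ha, rfl⟩⟩, hgp⟩ := (IsLocalization.mem_map_algebraMap_iff
    ((Submonoid.powers F).map (C (σ := σ))) (MvPolynomial σ D')).mp hg
  replace hgp : map (algebraMap D D') p = algebraMap D D' a • g := by
    rw [← algebraMap_def, ← hgp, algebraMap_def, map_C, mul_comm, C_mul']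
  have ha' : IsRegular (algebraMap D D' a) := (IsLocalization.map_units D' ⟨a, ha⟩).isRegular
  have hp0 : p ≠ 0 := by
    rintro rfl
    exact hg0 ((IsLocalization.map_units D' ⟨a, ha⟩).smul_eq_zero.mp (by rw [← hgp, map_zero]))
  obtain ⟨b, hb, hbp⟩ := hGle p hp hp0
  refine ⟨map (algebraMap D D') b, Ideal.mem_map_of_mem _ (hG b hb).1, ?_, ?_⟩
  · rw [MonomialOrder.leadingCoeff, hdeg, coeff_map]
    exact isUnit_of_dvd_unit (map_dvd _ (Finset.dvd_prod_of_mem mo.leadingCoeff hb))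
      (IsLocalization.Away.algebraMap_isUnit F)
  · rwa [hdeg, ← mo.degree_smul_of_isRegular ha', ← hgp, hdeg]

theorem exists_ne_zero_free_away_tensorProduct (D B : Type*) [CommRing D] [IsDomain D] [CommRing B]
    [Algebra D B] [Algebra.FiniteType D B] :
    ∃ F : D, F ≠ 0 ∧ Module.Free (Localization.Away F) (Localization.Away F ⊗[D] B) := by
  obtain ⟨n, π, hπ⟩ := Algebra.FiniteType.iff_quotient_mvPolynomial''.mp ‹Algebra.FiniteType D B›
  obtain ⟨F, hF, hfree⟩ := exists_ne_zero_free_quotient_map (RingHom.ker π)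
  let D' := Localization.Away F
  let e := algebraTensorAlgEquiv (σ := Fin n) D D'
  have he : (RingHom.ker π).map (Algebra.TensorProduct.includeRight (R := D) (A := D')) =
      ((RingHom.ker π).map (MvPolynomial.map (algebraMap D D'))).map e.symm := by
    rw [← Ideal.map_coe e.symm, Ideal.map_map, ← Ideal.map_coe Algebra.TensorProduct.includeRight]
    congr 1
    exact RingHom.ext fun p ↦ (algebraTensorAlgEquiv_symm_map D D' p).symm
  exact ⟨F, hF, .of_equiv ((Ideal.quotientEquivAlg _ _ e.symm he).trans
    ((Algebra.TensorProduct.tensorQuotientEquiv (R := D) D' _ D' (RingHom.ker π)).symm.trans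
      (Algebra.TensorProduct.congr AlgEquiv.refl
        (Ideal.quotientKerAlgEquivOfSurjective hπ)))).toLinearEquiv⟩

theorem exists_algebra_away_isScalarTower {D D' : Type*} [CommRing D] [CommRing D'] [Algebra D D']
    {F : D} (hF : IsUnit (algebraMap D D' F)) :
    ∃ _ : Algebra (Localization.Away F) D', IsScalarTower D (Localization.Away F) D' :=
  let := (IsLocalization.Away.lift (S := Localization.Away F) F hF).toAlgebra
  ⟨this, .of_algebraMap_eq fun x ↦ (IsLocalization.Away.lift_eq F hF x).symm⟩

theorem exists_ne_zero_forall_free_tensorProduct (D B : Type*) [CommRing D] [IsDomain D]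
    [CommRing B] [Algebra D B] [Algebra.FiniteType D B] :
    ∃ F : D, F ≠ 0 ∧ ∀ (D' : Type*) [CommRing D'] [Algebra D D'], IsUnit (algebraMap D D' F) →
      Module.Free D' (D' ⊗[D] B) := by
  obtain ⟨F, hF, hfree⟩ := exists_ne_zero_free_away_tensorProduct D B
  refine ⟨F, hF, fun D' _ _ hu ↦ ?_⟩
  obtain ⟨_, _⟩ := exists_algebra_away_isScalarTower hu
  exact .of_equiv
    (Algebra.TensorProduct.cancelBaseChange D (Localization.Away F) D' D' B).toLinearEquiv

theorem one_tmul_mem_nonZeroDivisors_of_flat {R A : Type*} (K : Type*) [CommRing R] [CommRing A]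
    [Algebra R A] [CommRing K] [Algebra R K] {h : A} (hh : h ∈ nonZeroDivisors A)
    [Module.Flat R (A ⧸ Ideal.span {h})] : (1 : K) ⊗ₜ[R] h ∈ nonZeroDivisors (K ⊗[R] A) := by
  let mulH : A →ₗ[R] A := LinearMap.mulLeft R h
  let modH : A →ₗ[R] A ⧸ Ideal.span {h} := (Ideal.Quotient.mkₐ R (Ideal.span {h})).toLinearMap
  have hexact : Function.Exact mulH modH := fun y ↦
    Ideal.Quotient.eq_zero_iff_mem.trans <| Ideal.mem_span_singleton.trans <|
      exists_congr fun _ ↦ eq_comm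
  have hinj : Function.Injective (mulH.lTensor K) :=
    LinearMap.lTensor_injective_of_exact_of_flat modH (Ideal.Quotient.mkₐ_surjective R _) mulH
      (fun x y ↦ (mul_cancel_left_mem_nonZeroDivisors hh).mp) hexact K
  have hmul : mulH.lTensor K = LinearMap.mulLeft R ((1 : K) ⊗ₜ[R] h) := by ext; simp [mulH]
  refine mem_nonZeroDivisors_iff_left.mpr fun z hz ↦ hinj ?_
  rw [hmul, map_zero, LinearMap.mulLeft_apply, hz]

theorem one_tmul_mem_nonZeroDivisors_of_isUnit {D B : Type*} [CommRing D] [CommRing B]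
    [Algebra D B] (D' : Type*) [CommRing D'] [Algebra D D'] [Module.Flat D D'] {h : B} {F : D}
    (hF : IsUnit (algebraMap D D' F)) (hh : ∀ b, h * b = 0 → F • b = 0) :
    (1 : D') ⊗ₜ[D] h ∈ nonZeroDivisors (D' ⊗[D] B) := by
  let mulH : B →ₗ[D] B := LinearMap.mulLeft D h
  have hmul : mulH.lTensor D' = LinearMap.mulLeft D ((1 : D') ⊗ₜ[D] h) := by ext; simp [mulH]
  have hexact := Module.Flat.lTensor_exact D' (LinearMap.exact_subtype_ker_map mulH)
  refine mem_nonZeroDivisors_iff_left.mpr fun z hz ↦ ?_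
  obtain ⟨y, rfl⟩ := (hexact z).mp (by rwa [hmul])
  have hFb (b : LinearMap.ker mulH) : F • b = 0 := Subtype.ext (hh b b.2)
  have hFy : algebraMap D D' F • y = 0 := by
    clear hz
    induction y with
    | zero => rw [smul_zero]
    | add y₁ y₂ h₁ h₂ => rw [smul_add, h₁, h₂, add_zero]
    | tmul a b => rw [algebraMap_smul, ← TensorProduct.tmul_smul, hFb, TensorProduct.tmul_zero]
  rw [hF.smul_eq_zero.mp hFy, map_zero]

theorem exists_ne_zero_forall_one_tmul_mem_nonZeroDivisors {D B : Type*} [CommRing D] [IsDomain D]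
    [CommRing B] [Algebra D B] [Algebra.FiniteType D B] (h : B) {F₁ : D} (hF₁ : F₁ ≠ 0)
    (hh : ∀ b, h * b = 0 → F₁ • b = 0) :
    ∃ F : D, F ≠ 0 ∧ ∀ (K : Type*) [CommRing K] [Algebra D K], IsUnit (algebraMap D K F) →
      (1 : K) ⊗ₜ[D] h ∈ nonZeroDivisors (K ⊗[D] B) := by
  obtain ⟨F, hF, hfree⟩ := exists_ne_zero_forall_free_tensorProduct D (B ⧸ Ideal.span {h})
  refine ⟨F * F₁, mul_ne_zero hF hF₁, fun K _ _ hK ↦ ?_⟩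
  let D' := Localization.Away (F * F₁)
  obtain ⟨_, _⟩ := exists_algebra_away_isScalarTower hK
  have hu : IsUnit (algebraMap D D' F * algebraMap D D' F₁) :=
    map_mul (algebraMap D D') F F₁ ▸ IsLocalization.Away.algebraMap_isUnit (F * F₁)
  have hflat : Module.Flat D' ((D' ⊗[D] B) ⧸ Ideal.span {(1 : D') ⊗ₜ[D] h}) := by
    have := hfree D' (isUnit_of_mul_isUnit_left hu)
    have hspan : (Ideal.span {h}).map (Algebra.TensorProduct.includeRight (R := D) (A := D')) =
        Ideal.span {(1 : D') ⊗ₜ[D] h} := by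
      rw [Ideal.map_span, Set.image_singleton, Algebra.TensorProduct.includeRight_apply]
    rw [← hspan]
    exact .of_linearEquiv
      (Algebra.TensorProduct.tensorQuotientEquiv (R := D) D' B D' _).symm.toLinearEquiv
  have hnzd : (1 : K) ⊗ₜ[D'] ((1 : D') ⊗ₜ[D] h) ∈ nonZeroDivisors _ :=
    one_tmul_mem_nonZeroDivisors_of_flat K <|
      one_tmul_mem_nonZeroDivisors_of_isUnit D' (isUnit_of_mul_isUnit_right hu) hh
  exact comap_nonZeroDivisors_le_of_injective
    (Algebra.TensorProduct.cancelBaseChange D D' K K B).symm.injective hnzd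

theorem isReduced_of_etale (E A : Type*) [CommRing E] [IsDomain E] [CommRing A] [Algebra E A]
    [Algebra.Etale E A] : IsReduced A := by
  have : IsReduced (FractionRing E ⊗[E] A) :=
    Algebra.FormallyUnramified.isReduced_of_field (FractionRing E) _
  exact isReduced_of_injective
    (Algebra.TensorProduct.includeRight : A →ₐ[E] FractionRing E ⊗[E] A)
    (Algebra.TensorProduct.includeRight_injective (IsFractionRing.injective E (FractionRing E)))

theorem isReduced_of_smooth (K A : Type*) [Field K] [CommRing A] [Algebra K A]
    [Algebra.Smooth K A] : IsReduced A := by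
  refine ⟨fun a ha ↦ ?_⟩
  suffices (Ideal.span {a}).annihilator = ⊤ by
    rwa [Ideal.eq_top_iff_one, Submodule.mem_annihilator_span_singleton, one_smul] at this
  by_contra hne
  obtain ⟨p, hp, hle⟩ := Ideal.exists_le_maximal _ hne
  obtain ⟨f, hf, n, _, _, _⟩ :=
    Algebra.IsSmoothAt.exists_isStandardEtale_mvPolynomial (R := K) (p := p)
  have := isReduced_of_etale (MvPolynomial (Fin n) K) (Localization.Away f)
  obtain ⟨⟨_, N, rfl⟩, hN⟩ :=
    (IsLocalization.map_eq_zero_iff (Submonoid.powers f) (Localization.Away f) a).mp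
      (ha.map (algebraMap A _)).eq_zero
  exact hf (hp.isPrime.mem_of_pow_mem N
    (hle ((Submodule.mem_annihilator_span_singleton _ _).mpr hN)))

theorem isSmoothAt_of_mem_minimalPrimes {D B : Type*} [CommRing D] [IsDomain D] [CharZero D]
    [CommRing B] [Algebra D B] [Algebra.FiniteType D B] [IsReduced B] {p : Ideal B} [p.IsPrime]
    (hp : p ∈ minimalPrimes B) (hpD : p.comap (algebraMap D B) = ⊥) : Algebra.IsSmoothAt D p := by
  let L := FractionRing D
  let P := Localization.AtPrime p
  have : Ring.KrullDimLE 0 P := .of_isLocalization _ hp _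
  let : Field P := (Ring.KrullDimLE.isField_of_isReduced : IsField P).toField
  have hinj : Function.Injective (algebraMap D P) := by
    refine (injective_iff_map_eq_zero _).mpr fun x hx ↦ ?_
    rw [← Ideal.mem_bot, ← hpD, Ideal.mem_comap,
      ← IsLocalization.AtPrime.to_map_mem_maximal_iff P p, ← IsScalarTower.algebraMap_apply, hx]
    exact zero_mem _
  let : Algebra L P := (IsFractionRing.lift hinj).toAlgebra
  have : IsScalarTower D L P :=
    .of_algebraMap_eq fun x ↦ (IsFractionRing.lift_algebraMap hinj x).symm
  have : Algebra.EssFiniteType B P := .of_isLocalization _ p.primeCompl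
  have : Algebra.EssFiniteType D P := .comp D B P
  have : Algebra.EssFiniteType L P := .of_comp D L P
  have : CharZero L := charZero_of_injective_algebraMap (IsFractionRing.injective D L)
  have : Algebra.FormallySmooth L P := .of_perfectField
  have : Algebra.FormallySmooth D L := .of_isLocalization (nonZeroDivisors D)
  exact Algebra.FormallySmooth.comp D L P

section

variable (D B : Type*) [CommRing D] [IsDomain D] [CommRing B] [Algebra D B]
  [IsReduced B]

theorem exists_smooth_away_forall_notMem_minimalPrimes [CharZero D] [IsNoetherianRing D]
    [Algebra.FiniteType D B] :
    ∃ h : B, Algebra.Smooth D (Localization.Away h) ∧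
      ∀ p ∈ minimalPrimes B, p.comap (algebraMap D B) = ⊥ → h ∉ p := by
  classical
  have : IsNoetherianRing B := Algebra.FiniteType.isNoetherianRing D B
  have : Algebra.FinitePresentation D B := Algebra.FinitePresentation.of_finiteType.mp ‹_›
  obtain ⟨I, hI⟩ := (PrimeSpectrum.isClosed_iff_zeroLocus_ideal _).mp
    (Algebra.isOpen_smoothLocus (R := D) (A := B)).isClosed_compl
  let s := (minimalPrimes.finite_of_isNoetherianRing B).toFinset.filter
    fun p ↦ p.comap (algebraMap D B) = ⊥
  have hs {p : Ideal B} : p ∈ s ↔ p ∈ minimalPrimes B ∧ p.comap (algebraMap D B) = ⊥ := by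
    simp only [s, Finset.mem_filter, Set.Finite.mem_toFinset]
  have hsI : ¬ ∃ p ∈ s, I ≤ p := by
    rintro ⟨p, hp, hle⟩
    obtain ⟨hmin, hpD⟩ := hs.mp hp
    have := hmin.1.1
    exact (hI.ge hle : (⟨p, this⟩ : PrimeSpectrum B) ∈ _) (isSmoothAt_of_mem_minimalPrimes hmin hpD)
  rw [← Ideal.subset_union_prime ⊤ ⊤ fun p hp _ _ ↦ (hs.mp hp).1.1.1, Set.not_subset] at hsI
  obtain ⟨h, hhI, hh⟩ := hsI
  refine ⟨h, ?_, fun p hp hpD hhp ↦ hh (Set.mem_biUnion (hs.mpr ⟨hp, hpD⟩) hhp)⟩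
  rw [← Algebra.basicOpen_subset_smoothLocus_iff_smooth, ← Set.compl_subset_compl, hI]
  exact fun x hx hxh ↦ hxh (hx hhI)

theorem exists_ne_zero_forall_mul_eq_zero [IsNoetherianRing B] {h : B}
    (hh : ∀ p ∈ minimalPrimes B, p.comap (algebraMap D B) = ⊥ → h ∉ p) :
    ∃ F : D, F ≠ 0 ∧ ∀ b, h * b = 0 → F • b = 0 := by
  classical
  have hc (p : Ideal B) (hp : p.comap (algebraMap D B) ≠ ⊥) : ∃ c ≠ 0, algebraMap D B c ∈ p :=
    let ⟨c, hc, hc0⟩ := Submodule.exists_mem_ne_zero_of_ne_bot hp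
    ⟨c, hc0, hc⟩
  choose! c hc0 hcp using hc
  let bad := (minimalPrimes.finite_of_isNoetherianRing B).toFinset.filter
    fun p ↦ p.comap (algebraMap D B) ≠ ⊥
  refine ⟨∏ p ∈ bad, c p, Finset.prod_ne_zero_iff.mpr fun p hp ↦ hc0 p (Finset.mem_filter.mp hp).2,
    fun b hb ↦ ?_⟩
  rw [← Ideal.mem_bot, ← Ideal.zero_eq_bot, ← nilradical_eq_zero B, nilradical,
    ← Ideal.sInf_minimalPrimes, Submodule.mem_sInf]
  intro (p : Ideal B) hp
  rw [Algebra.smul_def]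
  by_cases hpD : p.comap (algebraMap D B) = ⊥
  · exact p.mul_mem_left _
      ((hp.1.1.mem_or_mem (hb ▸ p.zero_mem : h * b ∈ p)).resolve_left (hh p hp hpD))
  · have hpbad : p ∈ bad := Finset.mem_filter.mpr ⟨(Set.Finite.mem_toFinset _).mpr hp, hpD⟩
    rw [map_prod]
    exact p.mul_mem_right _
      (Ideal.mem_of_dvd p (Finset.dvd_prod_of_mem (fun p ↦ algebraMap D B (c p)) hpbad) (hcp p hpD))

theorem exists_ne_zero_forall_isReduced_tensorProduct [CharZero D] [IsNoetherianRing D]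
    [Algebra.FiniteType D B] :
    ∃ F : D, F ≠ 0 ∧ ∀ (K : Type*) [Field K] [Algebra D K], algebraMap D K F ≠ 0 →
      IsReduced (K ⊗[D] B) := by
  have : IsNoetherianRing B := Algebra.FiniteType.isNoetherianRing D B
  obtain ⟨h, _, hh⟩ := exists_smooth_away_forall_notMem_minimalPrimes D B
  obtain ⟨F₁, hF₁, hF₁h⟩ := exists_ne_zero_forall_mul_eq_zero D B hh
  obtain ⟨F, hF, hFK⟩ := exists_ne_zero_forall_one_tmul_mem_nonZeroDivisors h hF₁ hF₁h
  refine ⟨F, hF, fun K _ _ hK ↦ ?_⟩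
  have hnzd := hFK K (isUnit_iff_ne_zero.mpr hK)
  have : IsReduced (K ⊗[D] Localization.Away h) := isReduced_of_smooth K _
  let baseMap : K ⊗[D] B →ₐ[K] K ⊗[D] Localization.Away h :=
    Algebra.TensorProduct.map (AlgHom.id K K) (IsScalarTower.toAlgHom D B (Localization.Away h))
  let := baseMap.toRingHom.toAlgebra
  have : IsScalarTower K (K ⊗[D] B) (K ⊗[D] Localization.Away h) :=
    .of_algebraMap_eq fun x ↦ (baseMap.commutes x).symm
  have := IsLocalization.tensorProduct_tensorProduct_right D K (.powers h)
    (Localization.Away h) (RingHom.ext fun b ↦ by simp [RingHom.algebraMap_toAlgebra, baseMap])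
  have hM : (Submonoid.powers h).map (Algebra.TensorProduct.includeRight (R := D) (A := K)) ≤
      nonZeroDivisors (K ⊗[D] B) := by
    rw [Submonoid.map_powers]
    exact Submonoid.powers_le.mpr hnzd
  exact isReduced_of_injective _ (IsLocalization.injective (K ⊗[D] Localization.Away h) hM)

end

theorem exists_ne_zero_forall_nontrivial_tensorProduct (E B : Type*) [CommRing E] [IsDomain E]
    [CommRing B] [Algebra E B] [FaithfulSMul E B] [Algebra.FiniteType E B] :
    ∃ F : E, F ≠ 0 ∧ ∀ (K : Type*) [Field K] [Algebra E K], algebraMap E K F ≠ 0 →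
      Nontrivial (K ⊗[E] B) := by
  obtain ⟨F, hF, _⟩ := exists_ne_zero_free_away_tensorProduct E B
  refine ⟨F, hF, fun K _ _ hK ↦ ?_⟩
  let E' := Localization.Away F
  obtain ⟨_, _⟩ := exists_algebra_away_isScalarTower (isUnit_iff_ne_zero.mpr hK)
  have : Nontrivial E' :=
    (IsLocalization.injective E' (powers_le_nonZeroDivisors_of_noZeroDivisors hF)).nontrivial
  have : Nontrivial (E' ⊗[E] B) := (Algebra.TensorProduct.includeLeft_injective (S := E)
    (FaithfulSMul.algebraMap_injective E B)).nontrivial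
  have := Module.FaithfullyFlat.rTensor_nontrivial E' (E' ⊗[E] B) K
  exact (Algebra.TensorProduct.cancelBaseChange E E' K K B).symm.toEquiv.nontrivial

theorem algebraicIndependent_one_tmul_of_nontrivial {ι D E B K L : Type*} [CommRing D]
    [CommRing E] [CommRing B] [Field K] [Field L] [Algebra D E] [Algebra D B] [Algebra E B]
    [IsScalarTower D E B] [Algebra D K] [Algebra D L] [Algebra E L] [IsScalarTower D E L]
    [Algebra K L] [IsScalarTower D K L] [Nontrivial (L ⊗[E] B)] {t : ι → E}
    (ht : AlgebraicIndependent K fun i ↦ algebraMap E L (t i)) :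
    AlgebraicIndependent K fun i ↦ (1 : K) ⊗ₜ[D] algebraMap E B (t i) := by
  let l : K ⊗[D] B →ₐ[K] L ⊗[E] B := Algebra.TensorProduct.lift (Algebra.ofId K _)
    ((Algebra.TensorProduct.includeRight : B →ₐ[E] L ⊗[E] B).restrictScalars D)
    (fun _ _ ↦ .all _ _)
  have hl : l ∘ (fun i ↦ (1 : K) ⊗ₜ[D] algebraMap E B (t i)) =
      IsScalarTower.toAlgHom K L (L ⊗[E] B) ∘ fun i ↦ algebraMap E L (t i) := by
    funext i
    simp [l, Algebra.algebraMap_eq_smul_one, Algebra.TensorProduct.one_def,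
      TensorProduct.smul_tmul']
  exact .of_comp l (hl ▸ ht.map' (algebraMap L (L ⊗[E] B)).injective)

theorem exists_ne_zero_forall_algebraicIndependent_one_tmul {ι D B : Type*} [CommRing D]
    [IsDomain D] [CommRing B] [Algebra D B] [Algebra.FiniteType D B] {x : ι → B}
    (hx : AlgebraicIndependent D x) :
    ∃ F : D, F ≠ 0 ∧ ∀ (K : Type*) [Field K] [Algebra D K], algebraMap D K F ≠ 0 →
      AlgebraicIndependent K fun i ↦ (1 : K) ⊗ₜ[D] x i := by
  let := (aeval (R := D) x).toRingHom.toAlgebra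
  have hX (p : MvPolynomial ι D) : algebraMap (MvPolynomial ι D) B p = aeval x p := rfl
  have : IsScalarTower D (MvPolynomial ι D) B :=
    .of_algebraMap_eq fun a ↦ ((aeval (R := D) x).commutes a).symm
  have : FaithfulSMul (MvPolynomial ι D) B := (faithfulSMul_iff_algebraMap_injective _ B).mpr hx
  have : Algebra.FiniteType (MvPolynomial ι D) B := .of_restrictScalars_finiteType D _ _
  obtain ⟨g, hg, hgK⟩ := exists_ne_zero_forall_nontrivial_tensorProduct (MvPolynomial ι D) B
  obtain ⟨μ, hμ⟩ := ne_zero_iff.mp hg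
  refine ⟨g.coeff μ, hμ, fun K _ _ hK ↦ ?_⟩
  obtain ⟨L, _, _, _, _, hL⟩ : ∃ (L : Type _) (_ : Field L) (_ : Algebra (MvPolynomial ι K) L)
      (_ : Algebra K L) (_ : IsScalarTower K (MvPolynomial ι K) L),
      Function.Injective (algebraMap (MvPolynomial ι K) L) :=
    ⟨FractionRing (MvPolynomial ι K), inferInstance, inferInstance, inferInstance, inferInstance,
      IsFractionRing.injective _ _⟩
  let := ((algebraMap K L).comp (algebraMap D K)).toAlgebra
  have : IsScalarTower D K L := .of_algebraMap_eq fun _ ↦ rfl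
  let := ((algebraMap (MvPolynomial ι K) L).comp (map (algebraMap D K))).toAlgebra
  have hmap (p : MvPolynomial ι D) : algebraMap (MvPolynomial ι D) L p =
    algebraMap (MvPolynomial ι K) L (map (algebraMap D K) p) := rfl
  have : IsScalarTower D (MvPolynomial ι D) L := .of_algebraMap_eq fun a ↦ by
    rw [hmap, algebraMap_eq, map_C, ← algebraMap_eq, ← IsScalarTower.algebraMap_apply,
      ← IsScalarTower.algebraMap_apply]
  have : Nontrivial (L ⊗[MvPolynomial ι D] B) := by
    refine hgK L fun h ↦ hK ?_
    rw [← coeff_map, (map_eq_zero_iff _ hL).mp h, coeff_zero]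
  have ht : AlgebraicIndependent K
      fun i ↦ algebraMap (MvPolynomial ι D) L (X (R := D) i) := by
    simp only [hmap, map_X]
    exact (algebraicIndependent_X ι K).map' (f := IsScalarTower.toAlgHom K _ L) hL
  have := algebraicIndependent_one_tmul_of_nontrivial (D := D) (B := B) ht
  simpa only [hX, aeval_X] using this

/-! ### The universal linear form -/

theorem mem_nonZeroDivisors_of_forall_coeff_mul_eq_zero {σ R : Type*} [CommRing R] [IsReduced R]
    {p : MvPolynomial σ R} (hp : ∀ c, (∀ μ, p.coeff μ * c = 0) → c = 0) :
    p ∈ nonZeroDivisors (MvPolynomial σ R) := by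
  refine mem_nonZeroDivisors_iff_left.mpr fun q hq ↦ MvPolynomial.ext _ _ fun ν ↦ ?_
  rw [coeff_zero]
  refine hp _ fun μ ↦ IsReduced.eq_zero _ ?_
  rw [← mem_nilradical, nilradical_eq_sInf, Ideal.mem_sInf]
  intro P (hP : P.IsPrime)
  have hmap : map (Ideal.Quotient.mk P) p * map (Ideal.Quotient.mk P) q = 0 := by
    rw [← map_mul, hq, map_zero]
  rw [← Ideal.Quotient.eq_zero_iff_mem, map_mul, ← coeff_map, ← coeff_map]
  rcases mul_eq_zero.mp hmap with h | h <;> simp [h]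

section UniversalLinearForm

variable {R T : Type*} [CommRing R] [Fintype T]

/-- The universal `R`-linear combination `∑ t, a t • X t` of a family `a`, with indeterminate
coefficients `X t`. -/
def universalLinearForm (a : T → R) : MvPolynomial T R :=
  ∑ t, C (a t) * X t

theorem map_universalLinearForm {S : Type*} [CommRing S] (f : R →+* S) (a : T → R) :
    map f (universalLinearForm a) = universalLinearForm (f ∘ a) := by
  simp [universalLinearForm]

theorem universalLinearForm_mem_nonZeroDivisors [IsReduced R] {a : T → R}
    (ha : ∀ c, (∀ t, a t * c = 0) → c = 0) :
    universalLinearForm a ∈ nonZeroDivisors (MvPolynomial T R) := by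
  classical
  refine mem_nonZeroDivisors_of_forall_coeff_mul_eq_zero fun c hc ↦ ha c fun t ↦ ?_
  simpa [universalLinearForm, coeff_sum, coeff_C_mul, coeff_X, Finsupp.single_left_inj] using
    hc (Finsupp.single t 1)

variable [DecidableEq T] {t₀ : T}

/-- The `R`-algebra map `R[X_t] → R[X_t | t ≠ t₀]` replacing the variable `X t₀` by the linear
form with coefficients `b` in the other ones. -/
def eliminateVar (t₀ : T) (b : {t // t ≠ t₀} → R) :
    MvPolynomial T R →ₐ[R] MvPolynomial {t // t ≠ t₀} R :=
  aeval fun t ↦ if h : t = t₀ then universalLinearForm b else X ⟨t, h⟩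

theorem eliminateVar_X_self (b : {t // t ≠ t₀} → R) :
    eliminateVar t₀ b (X t₀) = universalLinearForm b := by
  simp [eliminateVar]

theorem eliminateVar_X_coe (b : {t // t ≠ t₀} → R) (t : {t // t ≠ t₀}) :
    eliminateVar t₀ b (X t) = X t := by
  simp [eliminateVar, t.2]

theorem eliminateVar_rename_coe (b : {t // t ≠ t₀} → R) (p : MvPolynomial {t // t ≠ t₀} R) :
    eliminateVar t₀ b (rename (↑) p) = p := by
  have h : (eliminateVar t₀ b).comp (rename (↑)) = .id R _ :=
    algHom_ext fun t ↦ by simp [eliminateVar_X_coe]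
  exact DFunLike.congr_fun h p

variable {a : T → R} {u : R}

theorem eliminateVar_universalLinearForm (hu : a t₀ * u = 1) :
    eliminateVar t₀ (fun t ↦ -(a t * u)) (universalLinearForm a) = 0 := by
  rw [universalLinearForm, Fintype.sum_eq_add_sum_subtype_ne _ t₀]
  simp only [map_add, map_sum, map_mul, algHom_C, eliminateVar_X_self, eliminateVar_X_coe,
    universalLinearForm, Finset.mul_sum, ← Finset.sum_add_distrib]
  refine Finset.sum_eq_zero fun t _ ↦ ?_
  have h : C (a t₀) * C u = (1 : MvPolynomial {t // t ≠ t₀} R) := by rw [← C_mul, hu, C_1]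
  simp only [algebraMap_eq, map_neg, map_mul]
  linear_combination -C (a t) * X t * h

theorem C_mul_universalLinearForm (hu : a t₀ * u = 1) :
    C u * universalLinearForm a = X t₀ -
      rename (↑) (universalLinearForm fun t : {t // t ≠ t₀} ↦ -(a t * u)) := by
  have h : C (a t₀) * C u = (1 : MvPolynomial T R) := by rw [← C_mul, hu, C_1]
  rw [universalLinearForm, Fintype.sum_eq_add_sum_subtype_ne _ t₀]
  simp only [universalLinearForm, map_sum, map_mul, rename_C, rename_X, map_neg, mul_add,
    Finset.mul_sum, neg_mul, Finset.sum_neg_distrib, sub_neg_eq_add]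
  congr 1
  · linear_combination X t₀ * h
  · exact Finset.sum_congr rfl fun t _ ↦ by ring

theorem ker_eliminateVar (hu : a t₀ * u = 1) :
    RingHom.ker (eliminateVar t₀ fun t ↦ -(a t * u)) = Ideal.span {universalLinearForm a} := by
  set b : {t // t ≠ t₀} → R := fun t ↦ -(a t * u) with hb
  refine le_antisymm (fun p (hp : eliminateVar t₀ b p = 0) ↦ ?_)
    ((Ideal.span_singleton_le_iff_mem _).mpr (eliminateVar_universalLinearForm hu))
  let mk := Ideal.Quotient.mkₐ R (Ideal.span {universalLinearForm a})
  have hmk : (mk.comp (rename (↑))).comp (eliminateVar t₀ b) = mk := by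
    refine algHom_ext fun t ↦ ?_
    simp only [AlgHom.comp_apply]
    by_cases h : t = t₀
    · rw [h, eliminateVar_X_self, eq_comm]
      refine Ideal.Quotient.eq.mpr ?_
      rw [hb, ← C_mul_universalLinearForm hu]
      exact Ideal.mul_mem_left _ _ (Ideal.mem_span_singleton_self _)
    · rw [eliminateVar_X_coe b ⟨t, h⟩, rename_X]
  have := DFunLike.congr_fun hmk p
  rw [AlgHom.comp_apply, hp, map_zero] at this
  exact Ideal.Quotient.eq_zero_iff_mem.mp this.symm

end UniversalLinearForm

theorem isReduced_quotient_span_universalLinearForm {R T : Type*} [CommRing R] [IsReduced R]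
    [Fintype T] {a : T → R} {t₀ : T} (ha : IsUnit (a t₀)) :
    IsReduced (MvPolynomial T R ⧸ Ideal.span {universalLinearForm a}) := by
  classical
  obtain ⟨u, hu⟩ := ha.exists_right_inv
  rw [← ker_eliminateVar hu]
  exact isReduced_of_injective _ (RingHom.kerLift_injective (eliminateVar t₀ _).toRingHom)

section Transcendence

variable {τ k Q : Type*} [Field k] [CommRing Q] [Algebra k Q]

theorem transcendental_adjoin_X_C {b : Q} (hb : Transcendental k b) :
    Transcendental (Algebra.adjoin k (Set.range (X : τ → MvPolynomial τ Q)))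
      (C b : MvPolynomial τ Q) := by
  have hind := (algebraicIndependent_unique_type_iff (ι := Unit) (x := fun _ ↦ b)).mpr hb
  have := (hind.sumElim_comp (algebraicIndependent_X τ Q)).transcendental_adjoin
    (s := Set.range Sum.inl) (i := .inr ()) (by simp)
  rwa [← Set.range_comp, Sum.elim_comp_inl] at this

/-- The `Q`-algebra endomorphism `p(X) ↦ p(X + c)` of `Q[X]`, for a vector `c` over a base
field `k`. -/
def translateVars (c : τ → k) : MvPolynomial τ Q →ₐ[Q] MvPolynomial τ Q :=
  aeval fun t ↦ X t + C (algebraMap k Q (c t))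

theorem translateVars_X (c : τ → k) (t : τ) :
    translateVars c (X t : MvPolynomial τ Q) = X t + C (algebraMap k Q (c t)) :=
  aeval_X _ _

theorem translateVars_injective (c : τ → k) : Function.Injective (translateVars (Q := Q) c) := by
  have h : (translateVars (-c)).comp (translateVars (Q := Q) c) = .id Q _ :=
    algHom_ext fun t ↦ by simp [translateVars]
  intro p q hpq
  simpa only [← AlgHom.comp_apply, h, AlgHom.id_apply] using congrArg (translateVars (-c)) hpq

theorem translateVars_mem_adjoin_X (c : τ → k) {p : MvPolynomial τ Q}
    (hp : p ∈ Algebra.adjoin k (Set.range X)) :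
    translateVars c p ∈ Algebra.adjoin k (Set.range (X : τ → MvPolynomial τ Q)) := by
  have h : (Algebra.adjoin k (Set.range X)).map ((translateVars (Q := Q) c).restrictScalars k) ≤
      Algebra.adjoin k (Set.range (X : τ → MvPolynomial τ Q)) := by
    rw [AlgHom.map_adjoin, Algebra.adjoin_le_iff]
    rintro _ ⟨_, ⟨t, rfl⟩, rfl⟩
    rw [AlgHom.restrictScalars_apply, translateVars_X]
    exact add_mem (Algebra.subset_adjoin ⟨t, rfl⟩) (Subalgebra.algebraMap_mem _ (c t))
  exact h (Subalgebra.mem_map.mpr ⟨p, hp, rfl⟩)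

theorem isAlgebraic_translateVars {p : MvPolynomial τ Q} (c : τ → k)
    (hp : IsAlgebraic (Algebra.adjoin k (Set.range (X : τ → MvPolynomial τ Q))) p) :
    IsAlgebraic (Algebra.adjoin k (Set.range (X : τ → MvPolynomial τ Q))) (translateVars c p) := by
  let f := (((translateVars (Q := Q) c).restrictScalars k).comp
    (Algebra.adjoin k (Set.range X)).val).codRestrict (Algebra.adjoin k (Set.range X))
    fun p ↦ translateVars_mem_adjoin_X c p.2
  refine hp.ringHom_of_comp_eq f (translateVars c) (fun p q h ↦ Subtype.ext ?_) rfl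
  exact translateVars_injective c (congrArg Subtype.val h)

theorem transcendental_adjoin_X_universalLinearForm [IsDomain Q] [Fintype τ] {b : τ → Q} {t₁ : τ}
    (hb : Transcendental k (b t₁)) :
    Transcendental (Algebra.adjoin k (Set.range (X : τ → MvPolynomial τ Q)))
      (universalLinearForm b) := by
  classical
  intro h
  refine transcendental_adjoin_X_C (τ := τ) hb ?_
  have hsub : translateVars (Pi.single t₁ (1 : k)) (universalLinearForm b) - universalLinearForm b =
      C (b t₁) := by
    simp only [universalLinearForm, map_sum, map_mul, translateVars_X, algHom_C, algebraMap_eq,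
      ← Finset.sum_sub_distrib, mul_add, add_sub_cancel_left]
    rw [Finset.sum_eq_single t₁ (fun t _ ht ↦ by simp [ht]) (by simp)]
    simp
  exact hsub ▸ (isAlgebraic_translateVars _ h).sub h

theorem algebraicIndependent_eliminateVar_X [IsDomain Q] {T : Type*} [Fintype T] [DecidableEq T]
    {t₀ : T} {b : {t // t ≠ t₀} → Q} {t₁ : {t // t ≠ t₀}} (hb : Transcendental k (b t₁)) :
    AlgebraicIndependent k fun t ↦ eliminateVar t₀ b (X t) := by
  refine (AlgebraicIndependent.iff_transcendental_adjoin_image t₀).mpr ⟨?_, ?_⟩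
  · have := (algebraicIndependent_X {t // t ≠ t₀} Q).restrictScalars (algebraMap k Q).injective
    exact (funext (eliminateVar_X_coe b)) ▸ this
  · have : (fun t ↦ eliminateVar t₀ b (X t)) '' {t₀}ᶜ = Set.range X := by
      rw [Set.image_eq_range]
      exact congrArg Set.range (funext fun t ↦ eliminateVar_X_coe b ⟨t, t.2⟩)
    rw [this, eliminateVar_X_self]
    exact transcendental_adjoin_X_universalLinearForm hb

end Transcendence

theorem le_trdeg_mvPolynomial_of_add_le.{u} {k T A : Type u} [Field k] [Fintype T] [CommRing A]
    [IsDomain A] [Algebra k A] [Algebra (MvPolynomial T k) A]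
    [IsScalarTower k (MvPolynomial T k) A] [FaithfulSMul (MvPolynomial T k) A] {r : Cardinal}
    (h : Fintype.card T + r ≤ Algebra.trdeg k A) :
    r ≤ Algebra.trdeg (MvPolynomial T k) A := by
  rw [← trdeg_add_eq k (MvPolynomial T k), MvPolynomial.trdeg_of_isDomain,
    Cardinal.lift_id, Cardinal.mk_fintype, add_comm, add_comm (Fintype.card T : Cardinal)] at h
  exact (Cardinal.add_nat_le_add_nat_iff _).mp h

theorem exists_algebraicIndependent_of_le_trdeg {D A : Type*} [CommRing D] [CommRing A]
    [IsDomain A] [Algebra D A] [FaithfulSMul D A] {r : ℕ} (h : r ≤ Algebra.trdeg D A) :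
    ∃ x : Fin r → A, AlgebraicIndependent D x := by
  have : IsDomain D := .of_faithfulSMul D A
  obtain ⟨s, hs⟩ := exists_isTranscendenceBasis D A
  rw [← hs.cardinalMk_eq_trdeg] at h
  obtain ⟨f⟩ : Nonempty (Fin r ↪ s) := Cardinal.lift_mk_le'.mp (by simpa using h)
  exact ⟨_, hs.1.comp f f.injective⟩

theorem card_add_le_trdeg_mvPolynomial_subtype_ne.{u} {k T Q : Type u} [Field k] [Fintype T]
    (t₀ : T) [CommRing Q] [IsDomain Q] [Algebra k Q] {r : ℕ}
    (h : (r + 1 : ℕ) ≤ Algebra.trdeg k Q) :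
    Fintype.card T + r ≤ Algebra.trdeg k (MvPolynomial {t // t ≠ t₀} Q) := by
  classical
  have hcard : Fintype.card {t // t ≠ t₀} + 1 = Fintype.card T := by
    rw [← Fintype.card_option, Fintype.card_congr (Equiv.optionSubtypeNe t₀)]
  rw [← trdeg_add_eq k Q, MvPolynomial.trdeg_of_isDomain, Cardinal.lift_id, Cardinal.mk_fintype,
    ← hcard]
  calc ((Fintype.card {t // t ≠ t₀} + 1 : ℕ) : Cardinal) + r
      = (r + 1 : ℕ) + (Fintype.card {t // t ≠ t₀} : Cardinal) := by push_cast; ring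
    _ ≤ _ := by gcongr

theorem exists_algebraicIndependent_mvPolynomial_of_surjective.{u} {k T B A : Type u} [Field k]
    [Fintype T] [CommRing B] [Algebra (MvPolynomial T k) B] [CommRing A] [IsDomain A]
    [Algebra k A] {φ : B →+* A} (hφ : Function.Surjective φ) {y : T → A}
    (hy : AlgebraicIndependent k y)
    (hφy : φ.comp (algebraMap (MvPolynomial T k) B) = aeval (R := k) y) {r : ℕ}
    (hr : Fintype.card T + r ≤ Algebra.trdeg k A) :
    ∃ x : Fin r → B, AlgebraicIndependent (MvPolynomial T k) x := by
  let _ := (aeval (R := k) y).toAlgebra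
  have : IsScalarTower k (MvPolynomial T k) A :=
    .of_algebraMap_eq' (aeval (R := k) y).comp_algebraMap.symm
  have : FaithfulSMul (MvPolynomial T k) A := (faithfulSMul_iff_algebraMap_injective _ _).mpr hy
  obtain ⟨x, hx⟩ := exists_algebraicIndependent_of_le_trdeg (le_trdeg_mvPolynomial_of_add_le hr)
  let φ' : B →ₐ[MvPolynomial T k] A := { φ with commutes' := RingHom.congr_fun hφy }
  choose z hz using fun i ↦ hφ (x i)
  exact ⟨z, .of_comp φ' ((funext hz : φ' ∘ z = x) ▸ hx)⟩

attribute [local instance] algebraMvPolynomial in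
theorem exists_algebraicIndependent_quotient_span_universalLinearForm.{u} {k R Q T : Type u}
    [Field k] [CommRing R] [Algebra k R] [CommRing Q] [IsDomain Q] [Algebra k Q] [Fintype T]
    {π : R →ₐ[k] Q} (hπ : Function.Surjective π) {a : T → R} {t₀ t₁ : T} {u : Q}
    (hu : π (a t₀) * u = 1) (ht₁ : Transcendental k (π (a t₁) * u)) {r : ℕ}
    (hr : (r + 1 : ℕ) ≤ Algebra.trdeg k Q) :
    ∃ x : Fin r → MvPolynomial T R ⧸ Ideal.span {universalLinearForm a},
      AlgebraicIndependent (MvPolynomial T k) x := by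
  classical
  let b : {t // t ≠ t₀} → Q := fun t ↦ -(π (a t) * u)
  have hne : t₁ ≠ t₀ := by
    rintro rfl
    exact ht₁ (hu ▸ isAlgebraic_one)
  have hind : AlgebraicIndependent k fun t ↦ eliminateVar t₀ b (X t) :=
    algebraicIndependent_eliminateVar_X (t₁ := ⟨t₁, hne⟩) fun h ↦ ht₁ (neg_neg (π _ * u) ▸ h.neg)
  let φ : MvPolynomial T R →+* MvPolynomial {t // t ≠ t₀} Q :=
    (eliminateVar t₀ b).toRingHom.comp (map π)
  have hφ : Function.Surjective φ :=
    Function.Surjective.comp (g := eliminateVar t₀ b) (fun p ↦ ⟨_, eliminateVar_rename_coe b p⟩)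
      (map_surjective (π : R →+* Q) hπ)
  have hker : ∀ p ∈ Ideal.span {universalLinearForm a}, φ p = 0 := by
    refine fun p hp ↦ (Ideal.span_singleton_le_iff_mem (RingHom.ker φ)).mpr ?_ hp
    change eliminateVar t₀ b (map π (universalLinearForm a)) = 0
    rw [map_universalLinearForm]
    exact eliminateVar_universalLinearForm (a := π ∘ a) hu
  refine exists_algebraicIndependent_mvPolynomial_of_surjective
    (Ideal.Quotient.lift_surjective_of_surjective _ hker hφ) hind (ringHom_ext (fun c ↦ ?_)
      fun t ↦ ?_) (card_add_le_trdeg_mvPolynomial_subtype_ne t₀ hr)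
  · change φ (map (algebraMap k R) (C c)) = _
    simp [φ]
  · change φ (map (algebraMap k R) (X t)) = _
    simp [φ]

/-! ### Specialization of the universal linear form -/

section Specialization

attribute [local instance] algebraMvPolynomial

variable {k R T : Type*} [Field k] [CommRing R] [Algebra k R]

theorem finiteType_mvPolynomial_mvPolynomial [Algebra.FiniteType k R] :
    Algebra.FiniteType (MvPolynomial T k) (MvPolynomial T R) :=
  .equiv inferInstance (Algebra.IsPushout.equiv k (MvPolynomial T k) R (MvPolynomial T R))

section SpecializeEquiv

variable {K : Type*} [Field K] [Algebra k K] [Algebra (MvPolynomial T k) K]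
  [IsScalarTower k (MvPolynomial T k) K]

variable (k R T K) in
/-- The specialization `K ⊗[k[T]] R[T] ≃ K ⊗[k] R` of the indeterminates in `R[T]` to their images
in a `k[T]`-algebra `K`. -/
def specializeEquiv : K ⊗[MvPolynomial T k] MvPolynomial T R ≃ₐ[K] K ⊗[k] R :=
  (Algebra.TensorProduct.congr AlgEquiv.refl
    (Algebra.IsPushout.equiv k (MvPolynomial T k) R (MvPolynomial T R)).symm).trans
  (Algebra.TensorProduct.cancelBaseChange k (MvPolynomial T k) K K R)

variable [Fintype T]

variable {u : T → K}

theorem specializeEquiv_one_tmul_universalLinearForm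
    (hu : ∀ t, algebraMap (MvPolynomial T k) K (X t) = u t) (a : T → R) :
    specializeEquiv k R T K (1 ⊗ₜ universalLinearForm a) = ∑ t, u t ⊗ₜ[k] a t := by
  let e := Algebra.IsPushout.equiv k (MvPolynomial T k) R (MvPolynomial T R)
  have hX t : e.symm (X t) = X t ⊗ₜ 1 := by
    rw [AlgEquiv.symm_apply_eq, Algebra.IsPushout.equiv_tmul, map_one, mul_one, algebraMap_def,
      map_X]
  have hC c : e.symm (C c) = 1 ⊗ₜ c := by
    rw [AlgEquiv.symm_apply_eq, Algebra.IsPushout.equiv_tmul, map_one, one_mul, algebraMap_eq]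
  simp [specializeEquiv, universalLinearForm, hX, hC, e, TensorProduct.tmul_sum,
    Algebra.smul_def, hu]

/-- The specialization of the universal linear form to a linear form over `K`, on the quotients
by these forms. -/
def specializeQuotientEquiv (hu : ∀ t, algebraMap (MvPolynomial T k) K (X t) = u t) (a : T → R) :
    K ⊗[MvPolynomial T k] (MvPolynomial T R ⧸ Ideal.span {universalLinearForm a}) ≃ₐ[K]
      K ⊗[k] R ⧸ Ideal.span {∑ t, u t ⊗ₜ[k] a t} :=
  (Algebra.TensorProduct.tensorQuotientEquiv (R := MvPolynomial T k) K (MvPolynomial T R) K _).trans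
    (Ideal.quotientEquivAlg _ _ (specializeEquiv k R T K) <| by
      rw [← specializeEquiv_one_tmul_universalLinearForm hu a, Ideal.map_span, Ideal.map_span,
        Set.image_singleton, Set.image_singleton]
      rfl)

end SpecializeEquiv

variable [Fintype T] [Algebra.FiniteType k R]

theorem exists_ne_zero_forall_isReduced_quotient_span_sum_tmul [CharZero k] [IsReduced R]
    {a : T → R} {t₀ : T} (ha : IsUnit (a t₀)) :
    ∃ F : MvPolynomial T k, F ≠ 0 ∧ ∀ (K : Type*) [Field K] [Algebra k K] (u : T → K),
      aeval u F ≠ 0 → IsReduced (K ⊗[k] R ⧸ Ideal.span {∑ t, u t ⊗ₜ[k] a t}) := by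
  have := finiteType_mvPolynomial_mvPolynomial (k := k) (R := R) (T := T)
  have := isReduced_quotient_span_universalLinearForm ha
  obtain ⟨F, hF, h⟩ := exists_ne_zero_forall_isReduced_tensorProduct (MvPolynomial T k)
    (MvPolynomial T R ⧸ Ideal.span {universalLinearForm a})
  refine ⟨F, hF, fun K _ _ u hu ↦ ?_⟩
  let _ := (aeval (R := k) u).toAlgebra
  have : IsScalarTower k (MvPolynomial T k) K := .of_algebraMap_eq' (aeval u).comp_algebraMap.symm
  have := h K hu
  let e := specializeQuotientEquiv (k := k) (aeval_X u) a
  exact isReduced_of_injective e.symm e.symm.injective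

theorem exists_ne_zero_forall_sum_tmul_mem_nonZeroDivisors [IsReduced R] {a : T → R}
    (ha : ∀ c, (∀ t, a t * c = 0) → c = 0) :
    ∃ F : MvPolynomial T k, F ≠ 0 ∧ ∀ (K : Type*) [Field K] [Algebra k K] (u : T → K),
      aeval u F ≠ 0 → ∑ t, u t ⊗ₜ[k] a t ∈ nonZeroDivisors (K ⊗[k] R) := by
  have := finiteType_mvPolynomial_mvPolynomial (k := k) (R := R) (T := T)
  obtain ⟨F, hF, h⟩ := exists_ne_zero_forall_one_tmul_mem_nonZeroDivisors (D := MvPolynomial T k)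
    (universalLinearForm a) one_ne_zero fun b hb ↦ by
      rw [one_smul]
      exact (mem_nonZeroDivisors_iff.mp (universalLinearForm_mem_nonZeroDivisors ha)).1 b hb
  refine ⟨F, hF, fun K _ _ u hu ↦ ?_⟩
  let _ := (aeval (R := k) u).toAlgebra
  have : IsScalarTower k (MvPolynomial T k) K := .of_algebraMap_eq' (aeval u).comp_algebraMap.symm
  rw [← specializeEquiv_one_tmul_universalLinearForm (aeval_X u),
    ← MulEquivClass.map_nonZeroDivisors (specializeEquiv k R T K)]
  exact Submonoid.mem_map_of_mem _ (h K (isUnit_iff_ne_zero.mpr hu))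

theorem exists_ne_zero_forall_ringKrullDim_quotient_span_sum_tmul_le [IsReduced R] {a : T → R}
    (ha : ∀ c, (∀ t, a t * c = 0) → c = 0) {s : ℕ} (hs : ringKrullDim R ≤ (s + 1 : ℕ)) :
    ∃ F : MvPolynomial T k, F ≠ 0 ∧ ∀ (K : Type*) [Field K] [Algebra k K] (u : T → K),
      aeval u F ≠ 0 →
        ringKrullDim (K ⊗[k] R ⧸ Ideal.span {∑ t, u t ⊗ₜ[k] a t}) ≤ s := by
  obtain ⟨F, hF, h⟩ := exists_ne_zero_forall_sum_tmul_mem_nonZeroDivisors (k := k) ha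
  exact ⟨F, hF, fun K _ _ u hu ↦ ringKrullDim_quotient_span_singleton_le (h K u hu)
    ((ringKrullDim_tensorProduct_le k K R).trans hs)⟩

end Specialization

attribute [local instance] algebraMvPolynomial in
theorem exists_ne_zero_forall_le_ringKrullDim_quotient_span_sum_tmul.{u} {k R Q T : Type u}
    [Field k] [CommRing R] [Algebra k R] [Algebra.FiniteType k R] [CommRing Q] [IsDomain Q]
    [Algebra k Q] [Fintype T] {π : R →ₐ[k] Q} (hπ : Function.Surjective π) {a : T → R}
    {t₀ t₁ : T} {v : Q} (hv : π (a t₀) * v = 1) (ht₁ : Transcendental k (π (a t₁) * v)) {r : ℕ}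
    (hr : (r + 1 : ℕ) ≤ Algebra.trdeg k Q) :
    ∃ F : MvPolynomial T k, F ≠ 0 ∧ ∀ (K : Type*) [Field K] [Algebra k K] (u : T → K),
      aeval u F ≠ 0 → r ≤ ringKrullDim (K ⊗[k] R ⧸ Ideal.span {∑ t, u t ⊗ₜ[k] a t}) := by
  have := finiteType_mvPolynomial_mvPolynomial (k := k) (R := R) (T := T)
  obtain ⟨x, hx⟩ := exists_algebraicIndependent_quotient_span_universalLinearForm hπ hv ht₁ hr
  obtain ⟨F, hF, h⟩ := exists_ne_zero_forall_algebraicIndependent_one_tmul hx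
  refine ⟨F, hF, fun K _ _ u hu ↦ ?_⟩
  let _ := (aeval (R := k) u).toAlgebra
  have : IsScalarTower k (MvPolynomial T k) K := .of_algebraMap_eq' (aeval u).comp_algebraMap.symm
  let e := specializeQuotientEquiv (k := k) (aeval_X u) a
  exact le_ringKrullDim_of_algebraicIndependent ((h K hu).map' (f := e.toAlgHom) e.injective)

/-! ### Hypersurface sections and their charts -/

theorem isLocalization_away_quotientMk {R : Type*} (B : Type*) [CommRing R] [CommRing B]
    [Algebra R B] (w : R) [IsLocalization.Away w B] (I : Ideal R) :
    IsLocalization.Away (Ideal.Quotient.mk I w) (B ⧸ I.map (algebraMap R B)) := by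
  have : IsLocalization (Algebra.algebraMapSubmonoid (R ⧸ I) (.powers w))
    (B ⧸ I.map (algebraMap R B)) := inferInstance
  rwa [Algebra.algebraMapSubmonoid, Submonoid.map_powers] at this

theorem nonempty_localizationAway_quotient_span_ringEquiv {k R K T : Type*} [CommRing k]
    [CommRing R] [Algebra k R] [CommRing K] [Algebra k K] [Fintype T] (a : T → R) (u : T → K)
    (w : R) :
    Nonempty (Localization.Away
        (Ideal.Quotient.mk (Ideal.span {∑ t, u t ⊗ₜ[k] a t}) ((1 : K) ⊗ₜ[k] w)) ≃+*
      K ⊗[k] Localization.Away w ⧸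
        Ideal.span {∑ t, u t ⊗ₜ[k] algebraMap R (Localization.Away w) (a t)}) := by
  let baseMap : K ⊗[k] R →ₐ[K] K ⊗[k] Localization.Away w :=
    Algebra.TensorProduct.map (AlgHom.id K K) (IsScalarTower.toAlgHom k R (Localization.Away w))
  let := baseMap.toRingHom.toAlgebra
  have : IsScalarTower K (K ⊗[k] R) (K ⊗[k] Localization.Away w) :=
    .of_algebraMap_eq fun x ↦ (baseMap.commutes x).symm
  have : IsLocalization.Away ((1 : K) ⊗ₜ[k] w) (K ⊗[k] Localization.Away w) := by
    have := IsLocalization.tensorProduct_tensorProduct_right k K (.powers w)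
      (Localization.Away w) (RingHom.ext fun b ↦ by simp [RingHom.algebraMap_toAlgebra, baseMap])
    rwa [Submonoid.map_powers] at this
  have := isLocalization_away_quotientMk (K ⊗[k] Localization.Away w) ((1 : K) ⊗ₜ[k] w)
    (Ideal.span {∑ t, u t ⊗ₜ[k] a t})
  have hmap : (Ideal.span {∑ t, u t ⊗ₜ[k] a t}).map
      (algebraMap (K ⊗[k] R) (K ⊗[k] Localization.Away w)) =
      Ideal.span {∑ t, u t ⊗ₜ[k] algebraMap R (Localization.Away w) (a t)} := by
    simp [Ideal.map_span, RingHom.algebraMap_toAlgebra, baseMap]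
  let w' := Ideal.Quotient.mk (Ideal.span {∑ t, u t ⊗ₜ[k] a t}) ((1 : K) ⊗ₜ[k] w)
  let e := IsLocalization.algEquiv (Submonoid.powers w') (Localization.Away w')
    (K ⊗[k] Localization.Away w ⧸ (Ideal.span {∑ t, u t ⊗ₜ[k] a t}).map
      (algebraMap (K ⊗[k] R) (K ⊗[k] Localization.Away w)))
  exact ⟨e.toRingEquiv.trans (Ideal.quotEquivOfEq hmap)⟩

section HypersurfaceSection

variable {σ k K T : Type*} [CommRing k] [CommRing K] [Algebra k K] [Fintype T]

/-- The ideal cut out, on the base change of the zero scheme of `J` to `K`, by the member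
`∑ t, u t • p t` of the linear system spanned by the `p t`. -/
def sectionIdeal (J : Ideal (MvPolynomial σ k)) (p : T → MvPolynomial σ k) (u : T → K) :
    Ideal (MvPolynomial σ K) :=
  J.map (map (algebraMap k K)) ⊔ Ideal.span {∑ t, u t • map (algebraMap k K) (p t)}

variable {R : Type*} [CommRing R] [Algebra k R] (π : MvPolynomial σ k →ₐ[k] R)

variable (K) in
/-- The extension of scalars of a presentation of the algebra `R`. -/
def baseChangePresentation : MvPolynomial σ K →ₐ[K] K ⊗[k] R :=
  (Algebra.TensorProduct.map (AlgHom.id K K) π).comp (algebraTensorAlgEquiv k K).symm.toAlgHom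

theorem baseChangePresentation_map (p : MvPolynomial σ k) :
    baseChangePresentation K π (map (algebraMap k K) p) = 1 ⊗ₜ π p := by
  simp [baseChangePresentation]

variable {π}

theorem baseChangePresentation_surjective (hπ : Function.Surjective π) :
    Function.Surjective (baseChangePresentation K π) := by
  have hid : Function.Surjective (AlgHom.id K K) := Function.surjective_id
  rw [baseChangePresentation, AlgHom.coe_comp]
  exact Function.Surjective.comp (g := Algebra.TensorProduct.map (AlgHom.id K K) π)
    (Algebra.TensorProduct.map_surjective _ _ hid hπ) (algebraTensorAlgEquiv k K).symm.surjective

theorem ker_baseChangePresentation (hπ : Function.Surjective π) :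
    RingHom.ker (baseChangePresentation K π) = (RingHom.ker π).map (map (algebraMap k K)) := by
  let e := (algebraTensorAlgEquiv (σ := σ) k K).toRingEquiv
  have hker := Algebra.TensorProduct.lTensor_ker (A := K) π hπ
  calc RingHom.ker (baseChangePresentation K π)
    _ = (RingHom.ker (Algebra.TensorProduct.map (AlgHom.id k K) π)).comap e.symm := rfl
    _ = ((RingHom.ker π).map (Algebra.TensorProduct.includeRight : _ →ₐ[k] K ⊗[k] _)).map e := by
      rw [Ideal.comap_symm, hker]
    _ = (RingHom.ker π).map (map (algebraMap k K)) := by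
      rw [← Ideal.map_coe, ← Ideal.map_coe Algebra.TensorProduct.includeRight, Ideal.map_map]
      congr 1
      ext <;> simp [e]

/-- The coordinate ring of a section, as a quotient of the base change of the coordinate ring. -/
def quotientSectionIdealEquiv (hπ : Function.Surjective π) (p : T → MvPolynomial σ k)
    (u : T → K) :
    MvPolynomial σ K ⧸ sectionIdeal (RingHom.ker π) p u ≃+*
      K ⊗[k] R ⧸ Ideal.span {∑ t, u t ⊗ₜ[k] π (p t)} :=
  (DoubleQuot.quotQuotEquivQuotSup _ _).symm.trans <|
    Ideal.quotientEquiv _ _ ((Ideal.quotEquivOfEq (ker_baseChangePresentation hπ).symm).trans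
      (RingHom.quotientKerEquivOfSurjective (baseChangePresentation_surjective (K := K) hπ))) <| by
      rw [← Ideal.map_coe, Ideal.map_span, Ideal.map_span, Set.image_singleton, Set.image_singleton]
      congr 2
      change _ = baseChangePresentation K π (∑ t, u t • map (algebraMap k K) (p t))
      simp [baseChangePresentation_map, TensorProduct.smul_tmul']

theorem quotientSectionIdealEquiv_mk_map (hπ : Function.Surjective π) (p : T → MvPolynomial σ k)
    (u : T → K) (w : MvPolynomial σ k) :
    quotientSectionIdealEquiv hπ p u (Ideal.Quotient.mk _ (map (algebraMap k K) w)) =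
      Ideal.Quotient.mk _ (1 ⊗ₜ π w) :=
  congrArg (Ideal.Quotient.mk _) (baseChangePresentation_map π w)

theorem nonempty_localizationAway_quotient_sectionIdeal_ringEquiv (hπ : Function.Surjective π)
    (p : T → MvPolynomial σ k) (u : T → K) (w : MvPolynomial σ k) :
    Nonempty (Localization.Away
        (Ideal.Quotient.mk (sectionIdeal (RingHom.ker π) p u) (map (algebraMap k K) w)) ≃+*
      K ⊗[k] Localization.Away (π w) ⧸
        Ideal.span {∑ t, u t ⊗ₜ[k] algebraMap R (Localization.Away (π w)) (π (p t))}) := by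
  obtain ⟨e⟩ := nonempty_localizationAway_quotient_span_ringEquiv (k := k)
    (fun t ↦ π (p t)) u (π w)
  refine ⟨(IsLocalization.ringEquivOfRingEquiv
    (M := .powers (Ideal.Quotient.mk _ (map (algebraMap k K) w)))
    (T := .powers (Ideal.Quotient.mk _ ((1 : K) ⊗ₜ[k] π w))) _ _
    (quotientSectionIdealEquiv hπ p u) ?_).trans e⟩
  rw [Submonoid.map_powers]
  exact congrArg _ (quotientSectionIdealEquiv_mk_map hπ p u w)

end HypersurfaceSection

theorem trdeg_le_two_of_forall_isAlgebraic {k Q : Type*} [Field k] [CommRing Q] [IsDomain Q]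
    [Algebra k Q] {x y : Q} (h : ∀ q : Q, IsAlgebraic (Algebra.adjoin k {x, y}) q) :
    Algebra.trdeg k Q ≤ 2 := by
  have : Algebra.IsAlgebraic (Algebra.adjoin k {x, y}) Q := ⟨h⟩
  calc Algebra.trdeg k Q
    _ ≤ Cardinal.mk ({x, y} : Set Q) := Algebra.IsAlgebraic.trdeg_le_cardinalMk k {x, y}
    _ ≤ Cardinal.mk ({y} : Set Q) + 1 := Cardinal.mk_insert_le
    _ = 2 := by rw [Cardinal.mk_singleton, one_add_one_eq_two]

theorem exists_transcendental_of_two_lt_trdeg {k σ Q T : Type*} [Field k] [CommRing Q] [IsDomain Q]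
    [Algebra k Q] (φ : MvPolynomial σ k →ₐ[k] Q) (hφ : ∀ q, ∃ s, φ s ≠ 0 ∧ φ s * q ∈ φ.range)
    {x y : Q} {a : T → Q} (ha : ∀ v, ∃ t, φ (X v) = a t * x ∨ φ (X v) = a t * y)
    (htr : 2 < Algebra.trdeg k Q) : ∃ t, Transcendental k (a t) := by
  by_contra! halg
  let E := Algebra.adjoin k {x, y}
  refine htr.not_ge (trdeg_le_two_of_forall_isAlgebraic (x := x) (y := y) fun q ↦ ?_)
  have hx : IsAlgebraic E x := isAlgebraic_algebraMap (⟨x, Algebra.subset_adjoin (by simp)⟩ : E)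
  have hy : IsAlgebraic E y := isAlgebraic_algebraMap (⟨y, Algebra.subset_adjoin (by simp)⟩ : E)
  have ha' (t : T) : IsAlgebraic E (a t) :=
    (not_not.mp (halg t)).extendScalars (algebraMap k E).injective
  have hφE (s : MvPolynomial σ k) : IsAlgebraic E (φ s) := by
    induction s using MvPolynomial.induction_on with
    | C c =>
      have hc : φ (C c) = algebraMap E Q (algebraMap k E c) := φ.commutes c
      exact hc ▸ isAlgebraic_algebraMap _
    | add s s' hs hs' => exact map_add φ s s' ▸ hs.add hs'
    | mul_X s v hs =>
      rw [map_mul]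
      obtain ⟨t, h | h⟩ := ha v
      · exact h ▸ hs.mul ((ha' t).mul hx)
      · exact h ▸ hs.mul ((ha' t).mul hy)
  obtain ⟨s, hs, s', hs'⟩ := hφ q
  exact IsAlgebraic.of_mul (mem_nonZeroDivisors_of_ne_zero hs) (hφE s) (hs' ▸ hφE s')

theorem exists_injective_algebraMap_away_comp {A R ι : Type*} [CommRing A] [IsDomain A]
    [CommRing R] [Finite ι] {g : A →+* R} (hg : Function.Injective g) {w : ι → R}
    (hw : ∀ r, (∀ i, ∃ N : ℕ, w i ^ N * r = 0) → r = 0) :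
    ∃ i, Function.Injective ((algebraMap R (Localization.Away (w i))).comp g) := by
  have := Fintype.ofFinite ι
  by_contra! hcon
  have hker (i : ι) : ∃ b : A, b ≠ 0 ∧ ∃ N : ℕ, w i ^ N * g b = 0 := by
    obtain ⟨b, hb, hb₀⟩ : ∃ b, algebraMap R (Localization.Away (w i)) (g b) = 0 ∧ b ≠ 0 := by
      have h := (injective_iff_map_eq_zero _).not.mp (hcon i)
      push Not at h
      exact h
    obtain ⟨⟨_, N, rfl⟩, hN⟩ := (IsLocalization.map_eq_zero_iff (.powers (w i)) _ _).mp hb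
    exact ⟨b, hb₀, N, hN⟩
  choose b hb₀ N hN using hker
  refine Finset.prod_ne_zero_iff.mpr (fun i _ ↦ hb₀ i) (hg ?_ : ∏ i, b i = 0)
  rw [map_zero]
  refine hw _ fun i ↦ ⟨N i, ?_⟩
  obtain ⟨c, hc⟩ := Finset.dvd_prod_of_mem b (Finset.mem_univ i)
  rw [hc, map_mul, ← mul_assoc, hN, zero_mul]

theorem exists_ne_zero_mul_mem_range_of_away {k S R Q : Type*} [CommRing k] [CommRing S]
    [Algebra k S] [CommRing R] [Algebra k R] [CommRing Q] [Nontrivial Q] [Algebra k Q]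
    {π : S →ₐ[k] R} (hπ : Function.Surjective π) {w : S} {ρ : Localization.Away (π w) →ₐ[k] Q}
    (hρ : Function.Surjective ρ) (φ : S →ₐ[k] Q) (hφ : ∀ s, φ s = ρ (algebraMap R _ (π s)))
    (q : Q) :
    ∃ s, φ s ≠ 0 ∧ φ s * q ∈ φ.range := by
  obtain ⟨z, rfl⟩ := hρ q
  obtain ⟨⟨b, ⟨_, N, rfl⟩⟩, hb⟩ := IsLocalization.surj (.powers (π w)) z
  obtain ⟨s, rfl⟩ := hπ b
  have hw := (IsLocalization.Away.algebraMap_isUnit (S := Localization.Away (π w)) (π w)).map ρ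
  refine ⟨w ^ N, ?_, s, ?_⟩
  · rw [hφ, map_pow, map_pow, map_pow]
    exact (hw.pow N).ne_zero
  · change φ s = _
    rw [hφ, hφ, map_pow, ← map_mul, mul_comm, ← hb]

theorem isUnit_algebraMap_away_of_dvd_pow {R : Type*} [CommRing R] {a w : R} {N : ℕ}
    (h : a ∣ w ^ N) : IsUnit (algebraMap R (Localization.Away w) a) := by
  have hw : IsUnit (algebraMap R (Localization.Away w) w) :=
    IsLocalization.Away.algebraMap_isUnit w
  exact isUnit_of_dvd_unit (map_dvd _ h) (by rw [map_pow]; exact hw.pow N)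

section HypersurfaceSection

variable {k σ T R : Type*} [Field k] [Fintype T] [CommRing R] [Algebra k R]
  [Algebra.FiniteType k R] {π : MvPolynomial σ k →ₐ[k] R}

theorem exists_ne_zero_forall_isReduced_away_quotient_sectionIdeal [CharZero k] [IsReduced R]
    (hπ : Function.Surjective π) {p : T → MvPolynomial σ k} {w : MvPolynomial σ k} {t₀ : T}
    {N : ℕ} (ht₀ : p t₀ ∣ w ^ N) :
    ∃ F : MvPolynomial T k, F ≠ 0 ∧ ∀ (K : Type*) [Field K] [Algebra k K] (u : T → K),
      aeval u F ≠ 0 → IsReduced (Localization.Away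
        (Ideal.Quotient.mk (sectionIdeal (RingHom.ker π) p u) (map (algebraMap k K) w))) := by
  have : Algebra.FiniteType k (Localization.Away (π w)) :=
    .trans (S := R) inferInstance inferInstance
  have : IsReduced (Localization.Away (π w)) := inferInstance
  have hunit := isUnit_algebraMap_away_of_dvd_pow (map_pow π w N ▸ map_dvd π ht₀)
  obtain ⟨F, hF, h⟩ := exists_ne_zero_forall_isReduced_quotient_span_sum_tmul (k := k)
    (a := fun t ↦ algebraMap R (Localization.Away (π w)) (π (p t))) hunit
  refine ⟨F, hF, fun K _ _ u hu ↦ ?_⟩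
  obtain ⟨e⟩ := nonempty_localizationAway_quotient_sectionIdeal_ringEquiv hπ p u w
  have := h K u hu
  exact isReduced_of_injective e e.injective

theorem exists_ne_zero_forall_ringKrullDim_quotient_sectionIdeal_le [IsReduced R]
    (hπ : Function.Surjective π) {p : T → MvPolynomial σ k}
    (hp : ∀ c, (∀ t, π (p t) * c = 0) → c = 0) {s : ℕ} (hs : ringKrullDim R ≤ (s + 1 : ℕ)) :
    ∃ F : MvPolynomial T k, F ≠ 0 ∧ ∀ (K : Type*) [Field K] [Algebra k K] (u : T → K),
      aeval u F ≠ 0 →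
        ringKrullDim (MvPolynomial σ K ⧸ sectionIdeal (RingHom.ker π) p u) ≤ s := by
  obtain ⟨F, hF, h⟩ := exists_ne_zero_forall_ringKrullDim_quotient_span_sum_tmul_le (k := k) hp hs
  exact ⟨F, hF, fun K _ _ u hu ↦
    (ringKrullDim_eq_of_ringEquiv (quotientSectionIdealEquiv hπ p u)).trans_le (h K u hu)⟩

end HypersurfaceSection

theorem exists_ne_zero_forall_le_ringKrullDim_away_quotient_sectionIdeal.{u} {k σ T R : Type u}
    [Field k] [Fintype T] [CommRing R] [Algebra k R] [Algebra.FiniteType k R]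
    {π : MvPolynomial σ k →ₐ[k] R} (hπ : Function.Surjective π) {p : T → MvPolynomial σ k}
    {w x y : MvPolynomial σ k} {t₀ : T} {N : ℕ} (ht₀ : p t₀ ∣ w ^ N)
    (hp : ∀ v, ∃ t, p t * x = p t₀ * X v ∨ p t * y = p t₀ * X v) {r : ℕ} (hr : 1 ≤ r)
    {z : Fin (r + 2) → Localization.Away (π w)} (hz : AlgebraicIndependent k z) :
    ∃ F : MvPolynomial T k, F ≠ 0 ∧ ∀ (K : Type*) [Field K] [Algebra k K] (u : T → K),
      aeval u F ≠ 0 → (r + 1 : ℕ) ≤ ringKrullDim (Localization.Away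
        (Ideal.Quotient.mk (sectionIdeal (RingHom.ker π) p u) (map (algebraMap k K) w))) := by
  have : Algebra.FiniteType k (Localization.Away (π w)) :=
    .trans (S := R) inferInstance inferInstance
  obtain ⟨P, hP, hinj⟩ := exists_isPrime_injective_quotientMk_comp (aeval (R := k) z).toRingHom hz
  let Q := Localization.Away (π w) ⧸ P
  let toQ : Localization.Away (π w) →ₐ[k] Q := Ideal.Quotient.mkₐ k P
  let φ : MvPolynomial σ k →ₐ[k] Q :=
    toQ.comp ((IsScalarTower.toAlgHom k R (Localization.Away (π w))).comp π)
  have htoQ : Function.Surjective toQ := Ideal.Quotient.mk_surjective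
  have hindep : AlgebraicIndependent k (toQ ∘ z) := by
    have h : aeval (R := k) (toQ ∘ z) = toQ.comp (aeval z) := by ext; simp
    rw [AlgebraicIndependent, h]
    exact hinj
  have htr : (r + 2 : ℕ) ≤ Algebra.trdeg k Q := by
    simpa using hindep.lift_cardinalMk_le_trdeg
  have hunit : IsUnit (φ (p t₀)) :=
    (isUnit_algebraMap_away_of_dvd_pow (map_pow π w N ▸ map_dvd π ht₀)).map toQ
  obtain ⟨v, hv⟩ := hunit.exists_right_inv
  have hX (i : σ) : ∃ t, φ (X i) = φ (p t) * v * φ x ∨ φ (X i) = φ (p t) * v * φ y := by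
    obtain ⟨t, h⟩ := hp i
    refine ⟨t, h.imp (fun h ↦ ?_) fun h ↦ ?_⟩ <;>
    · have := congrArg φ h
      simp only [map_mul] at this
      linear_combination (-v) * this - φ (X i) * hv
  obtain ⟨t₁, ht₁⟩ := exists_transcendental_of_two_lt_trdeg φ
    (exists_ne_zero_mul_mem_range_of_away hπ htoQ φ fun _ ↦ rfl) hX
    (lt_of_lt_of_le (by exact_mod_cast (by omega : 2 < r + 2)) htr)
  obtain ⟨F, hF, h⟩ := exists_ne_zero_forall_le_ringKrullDim_quotient_span_sum_tmul (k := k)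
    (a := fun t ↦ algebraMap R (Localization.Away (π w)) (π (p t))) htoQ hv ht₁ htr
  refine ⟨F, hF, fun K _ _ u hu ↦ ?_⟩
  obtain ⟨e⟩ := nonempty_localizationAway_quotient_sectionIdeal_ringEquiv hπ p u w
  exact (h K u hu).trans_eq (ringKrullDim_eq_of_ringEquiv e).symm

/-! ### Saturation by the irrelevant ideal -/

theorem algebraMap_away_quotientMk_eq_zero_iff {S : Type*} [CommRing S] {I : Ideal S} {w g : S} :
    algebraMap (S ⧸ I) (Localization.Away (Ideal.Quotient.mk I w)) (Ideal.Quotient.mk I g) = 0 ↔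
      ∃ N : ℕ, w ^ N * g ∈ I := by
  rw [IsLocalization.map_eq_zero_iff (Submonoid.powers (Ideal.Quotient.mk I w))]
  simp [Submonoid.mem_powers_iff, ← Ideal.Quotient.eq_zero_iff_mem]

section Saturation

variable {k : Type} [Field k] {n m : ℕ}

theorem mem_satIdeal_iff_exists_pow_le {I C : Ideal (PolyS k n m)} {g : PolyS k n m} :
    g ∈ satIdeal I C ↔ ∃ t : ℕ, C ^ t ≤ Submodule.colon I {g} := by
  have hcolon (t : ℕ) (g : PolyS k n m) :
      g ∈ Submodule.colon I ((C : Set (PolyS k n m)) ^ t) ↔ C ^ t ≤ Submodule.colon I {g} := by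
    rw [Submodule.pow_eq_span_pow_set, Submodule.span_le, Submodule.mem_colon]
    simp [Set.subset_def, Submodule.mem_colon_singleton, mul_comm]
  have hmono : Monotone fun t : ℕ ↦ Submodule.colon I ((C : Set (PolyS k n m)) ^ t) :=
    fun s t hst g hg ↦ (hcolon t g).mpr ((Ideal.pow_le_pow_right hst).trans ((hcolon s g).mp hg))
  rw [satIdeal, Submodule.mem_iSup_of_directed _ hmono.directed_le]
  exact exists_congr fun t ↦ hcolon t g

theorem mem_satIdeal_iff_le_radical_colon {I C : Ideal (PolyS k n m)} {g : PolyS k n m} :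
    g ∈ satIdeal I C ↔ C ≤ (Submodule.colon I {g}).radical := by
  rw [mem_satIdeal_iff_exists_pow_le]
  refine ⟨fun ⟨t, ht⟩ c hc ↦ ⟨t, ht (Ideal.pow_mem_pow hc t)⟩, fun h ↦ ?_⟩
  exact Ideal.exists_pow_le_of_le_radical_of_fg h (IsNoetherian.noetherian C)

variable (k) in
/-- The monomial `x_i y_j`, whose non-vanishing locus is a standard affine chart of `ℙⁿ × ℙᵐ`. -/
def chartMonomial (p : Fin (n + 1) × Fin (m + 1)) : PolyS k n m :=
  X (Sum.inl p.1) * X (Sum.inr p.2)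

theorem birr_eq_span_range_chartMonomial :
    Birr k n m = Ideal.span (Set.range (chartMonomial k)) := by
  rw [Birr, Bone, Btwo, Ideal.span_mul_span']
  congr 1
  ext
  simp [Set.mem_mul, chartMonomial]

theorem mem_satIdeal_birr_iff {I : Ideal (PolyS k n m)} {g : PolyS k n m} :
    g ∈ satIdeal I (Birr k n m) ↔ ∀ p, ∃ N : ℕ, chartMonomial k p ^ N * g ∈ I := by
  rw [mem_satIdeal_iff_le_radical_colon, birr_eq_span_range_chartMonomial, Ideal.span_le]
  simp [Set.range_subset_iff, Ideal.mem_radical_iff, Submodule.mem_colon_singleton]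

theorem satIdeal_birr_eq_iInf_ker (I : Ideal (PolyS k n m)) :
    satIdeal I (Birr k n m) = ⨅ p, RingHom.ker
      ((algebraMap _ (Localization.Away (Ideal.Quotient.mk I (chartMonomial k p)))).comp
        (Ideal.Quotient.mk I)) := by
  ext g
  simp only [mem_satIdeal_birr_iff, Ideal.mem_iInf, RingHom.mem_ker, RingHom.comp_apply,
    algebraMap_away_quotientMk_eq_zero_iff]

theorem isRadical_satIdeal_birr {I : Ideal (PolyS k n m)}
    (h : ∀ p, IsReduced (Localization.Away (Ideal.Quotient.mk I (chartMonomial k p)))) :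
    (satIdeal I (Birr k n m)).IsRadical := by
  rw [satIdeal_birr_eq_iInf_ker]
  refine Ideal.isRadical_iInf _ fun p g ⟨N, hN⟩ ↦ ?_
  rw [RingHom.mem_ker, map_pow] at hN
  exact eq_zero_of_pow_eq_zero hN

theorem le_satIdeal_birr (I : Ideal (PolyS k n m)) : I ≤ satIdeal I (Birr k n m) :=
  fun _ hg ↦ mem_satIdeal_birr_iff.mpr fun _ ↦ ⟨0, I.mul_mem_left _ hg⟩

theorem ringKrullDim_quotient_satIdeal_birr_le (I : Ideal (PolyS k n m)) :
    ringKrullDim (PolyS k n m ⧸ satIdeal I (Birr k n m)) ≤ ringKrullDim (PolyS k n m ⧸ I) :=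
  ringKrullDim_le_of_surjective _ (Ideal.Quotient.factor_surjective (le_satIdeal_birr I))

theorem ringKrullDim_away_le_ringKrullDim_quotient_satIdeal_birr (I : Ideal (PolyS k n m))
    (p : Fin (n + 1) × Fin (m + 1)) :
    ringKrullDim (Localization.Away (Ideal.Quotient.mk I (chartMonomial k p))) ≤
      ringKrullDim (PolyS k n m ⧸ satIdeal I (Birr k n m)) := by
  let w := Ideal.Quotient.mk I (chartMonomial k p)
  let toAway := (algebraMap _ (Localization.Away w)).comp (Ideal.Quotient.mk I)
  have hker : satIdeal I (Birr k n m) ≤ RingHom.ker toAway :=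
    (satIdeal_birr_eq_iInf_ker I).trans_le (iInf_le _ p)
  refine ringKrullDim_le_of_forall_exists_isUnit_mul
    (Ideal.Quotient.lift _ toAway hker) fun z ↦ ?_
  obtain ⟨⟨b, ⟨_, N, rfl⟩⟩, hb⟩ := IsLocalization.surj (.powers w) z
  obtain ⟨s, rfl⟩ := Ideal.Quotient.mk_surjective b
  have hw := IsLocalization.Away.algebraMap_isUnit (S := Localization.Away w) w
  refine ⟨_, hw.pow N, Ideal.Quotient.mk _ s, ?_⟩
  rw [← map_pow, mul_comm]
  exact hb.symm

end Saturation

/-! ### Bihomogeneous ideals with empty zero locus -/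

theorem weightedHomogeneousComponent_mem_span {R σ M : Type*} [CommRing R] [AddCommMonoid M]
    {w : σ → M} {G : Set (MvPolynomial σ R)}
    (hG : ∀ g ∈ G, ∃ γ, IsWeightedHomogeneous w g γ) {p : MvPolynomial σ R}
    (hp : p ∈ Ideal.span G) (γ : M) : weightedHomogeneousComponent w γ p ∈ Ideal.span G := by
  classical
  let := weightedGradedAlgebra R w
  exact weightedHomogeneousComponent_mem_of_mem R w
    (Ideal.homogeneous_span (weightedHomogeneousSubmodule R w) G hG) hp γ

section

variable {K σ : Type*} [Field K] {w : σ → ℤ × ℤ} {a b : σ}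

theorem weightedHomogeneousComponent_aeval_pair (ha : w a = (1, 0)) (hb : w b = (0, 1))
    (P : MvPolynomial (Fin 2) K) (μ : Fin 2 →₀ ℕ) :
    weightedHomogeneousComponent w ((μ 0 : ℤ), (μ 1 : ℤ))
        (aeval ![(X a : MvPolynomial σ K), X b] P) =
      coeff μ P • (X a ^ μ 0 * X b ^ μ 1) := by
  classical
  induction P using MvPolynomial.induction_on' with
  | add P Q hP hQ => rw [map_add, map_add, hP, hQ, coeff_add, add_smul]
  | monomial ν c =>
    have hν : aeval ![(X a : MvPolynomial σ K), X b] (monomial ν c) =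
        c • (X a ^ ν 0 * X b ^ ν 1) := by
      rw [aeval_monomial, Finsupp.prod_fintype _ _ (by simp), Fin.prod_univ_two, Algebra.smul_def]
      rfl
    have hhom : X a ^ ν 0 * X b ^ ν 1 ∈
        weightedHomogeneousSubmodule K w ((ν 0 : ℤ), (ν 1 : ℤ)) := by
      have h := ((isWeightedHomogeneous_X K w a).pow (ν 0)).mul
        ((isWeightedHomogeneous_X K w b).pow (ν 1))
      rw [mem_weightedHomogeneousSubmodule]
      simpa [ha, hb] using h
    have hμν : ((μ 0 : ℤ), (μ 1 : ℤ)) = ((ν 0 : ℤ), (ν 1 : ℤ)) ↔ ν = μ := by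
      simp [Finsupp.ext_iff, Fin.forall_fin_two, eq_comm]
    rw [hν, map_smul, weightedHomogeneousComponent_of_mem hhom, coeff_monomial]
    simp only [hμν]
    split_ifs with h
    · rw [h]
    · simp

theorem exists_pow_mem_of_ringKrullDim_quotient_le_one [Finite σ] {I : Ideal (MvPolynomial σ K)}
    (hI : ∀ p ∈ I, ∀ γ, weightedHomogeneousComponent w γ p ∈ I)
    (ha : w a = (1, 0)) (hb : w b = (0, 1))
    (hdim : ringKrullDim (MvPolynomial σ K ⧸ I) ≤ (1 : ℕ)) :
    ∃ N : ℕ, (X a * X b) ^ N ∈ I := by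
  let x : Fin 2 → MvPolynomial σ K ⧸ I := Ideal.Quotient.mkₐ K I ∘ ![X a, X b]
  have hx : ¬ AlgebraicIndependent K x := fun h ↦
    absurd ((le_ringKrullDim_of_algebraicIndependent h).trans hdim) (by norm_cast)
  obtain ⟨P, hP, hP₀⟩ : ∃ P, aeval x P = 0 ∧ P ≠ 0 := by
    rw [AlgebraicIndependent, injective_iff_map_eq_zero] at hx
    push Not at hx
    exact hx
  have hmem : aeval ![X a, X b] P ∈ I := by
    rw [← Ideal.Quotient.eq_zero_iff_mem, ← Ideal.Quotient.mkₐ_eq_mk K]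
    exact (comp_aeval_apply _ _ P).trans hP
  obtain ⟨μ, hμ⟩ := ne_zero_iff.mp hP₀
  have hcomp := hI _ hmem ((μ 0 : ℤ), (μ 1 : ℤ))
  rw [weightedHomogeneousComponent_aeval_pair ha hb] at hcomp
  have hmonomial : X a ^ μ 0 * X b ^ μ 1 ∈ I :=
    (Submodule.smul_mem_iff (I.restrictScalars K) hμ).mp hcomp
  refine ⟨μ 0 + μ 1, ?_⟩
  have h := I.mul_mem_right (X a ^ μ 1 * X b ^ μ 0) hmonomial
  convert h using 1
  ring

end

theorem satIdeal_birr_eq_top_of_ringKrullDim_quotient_le_one {K : Type} [Field K] {n m : ℕ}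
    {G : Set (PolyS K n m)} (hG : ∀ g ∈ G, ∃ γ, g ∈ grad K n m γ)
    (hdim : ringKrullDim (PolyS K n m ⧸ Ideal.span G) ≤ (1 : ℕ)) :
    satIdeal (Ideal.span G) (Birr K n m) = ⊤ := by
  refine (Ideal.eq_top_iff_one _).mpr (mem_satIdeal_birr_iff.mpr fun p ↦ ?_)
  simp_rw [mul_one]
  exact exists_pow_mem_of_ringKrullDim_quotient_le_one
    (fun _ hp γ ↦ weightedHomogeneousComponent_mem_span hG hp γ) rfl rfl hdim

/-! ### Conditions on general coefficients -/

section HoldsGenerically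

variable {k T : Type*} [Field k]
  {P Q : ∀ (K : Type) [Field K] [Algebra k K], (T → K) → Prop}

variable (k T) in
/-- The condition `P` on a family of coefficients holds for a general family: it holds at every
point, over every extension field of `k`, of the complement of a fixed hypersurface `F = 0`. -/
def HoldsGenerically (P : ∀ (K : Type) [Field K] [Algebra k K], (T → K) → Prop) : Prop :=
  ∃ F : MvPolynomial T k, F ≠ 0 ∧
    ∀ (K : Type) [Field K] [Algebra k K] (u : T → K), aeval u F ≠ 0 → P K u

theorem HoldsGenerically.and (hP : HoldsGenerically k T P) (hQ : HoldsGenerically k T Q) :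
    HoldsGenerically k T fun K _ _ u ↦ P K u ∧ Q K u := by
  obtain ⟨F, hF, hP⟩ := hP
  obtain ⟨G, hG, hQ⟩ := hQ
  refine ⟨F * G, mul_ne_zero hF hG, fun K _ _ u hu ↦ ?_⟩
  rw [map_mul] at hu
  exact ⟨hP K u (left_ne_zero_of_mul hu), hQ K u (right_ne_zero_of_mul hu)⟩

theorem HoldsGenerically.forall {ι : Type*} [Finite ι]
    {P : ι → ∀ (K : Type) [Field K] [Algebra k K], (T → K) → Prop}
    (hP : ∀ i, HoldsGenerically k T (P i)) :
    HoldsGenerically k T fun K _ _ u ↦ ∀ i, P i K u := by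
  have := Fintype.ofFinite ι
  choose F hF hP using hP
  refine ⟨∏ i, F i, Finset.prod_ne_zero_iff.mpr fun i _ ↦ hF i, fun K _ _ u hu i ↦ hP i K u ?_⟩
  rw [map_prod] at hu
  exact Finset.prod_ne_zero_iff.mp hu i (Finset.mem_univ i)

theorem HoldsGenerically.mono (hP : HoldsGenerically k T P)
    (h : ∀ (K : Type) [Field K] [Algebra k K] (u : T → K), P K u → Q K u) :
    HoldsGenerically k T Q := by
  obtain ⟨F, hF, hP⟩ := hP
  exact ⟨F, hF, fun K _ _ u hu ↦ h K u (hP K u hu)⟩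

end HoldsGenerically

/-! ### Sections by forms of bidegree `(d, e)` -/

section Forms

variable {n m d e : ℕ}

theorem weight_wt (μ : Fin (n + 1) ⊕ Fin (m + 1) →₀ ℕ) :
    Finsupp.weight (wt n m) μ = (∑ i, (μ (Sum.inl i) : ℤ), ∑ j, (μ (Sum.inr j) : ℤ)) := by
  rw [Finsupp.weight_apply, Finsupp.sum_fintype _ _ (by simp), Fintype.sum_sum_type]
  ext <;> simp [wt, Prod.fst_sum, Prod.snd_sum]

variable (n m d e) in
/-- The exponents of the monomials of bidegree `(d, e)`. -/
abbrev BidegreeExponent : Type :=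
  {μ : Fin (n + 1) ⊕ Fin (m + 1) →₀ ℕ // Finsupp.weight (wt n m) μ = ((d : ℤ), (e : ℤ))}

instance : Finite (BidegreeExponent n m d e) := by
  refine Set.Finite.to_subtype (s := {μ | Finsupp.weight (wt n m) μ = ((d : ℤ), (e : ℤ))})
    ((Finsupp.finite_of_degree_le (d + e)).subset fun μ hμ ↦ ?_)
  rw [Set.mem_ofPred_eq, weight_wt, Prod.mk.injEq] at hμ
  rw [Set.mem_ofPred_eq, Finsupp.degree_eq_sum, Fintype.sum_sum_type]
  zify
  exact (congrArg₂ (· + ·) hμ.1 hμ.2).le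

instance : Fintype (BidegreeExponent n m d e) := Fintype.ofFinite _

variable (k : Type) [Field k]

/-- The monomial with exponent `t`. -/
def bidegreeMonomial (t : BidegreeExponent n m d e) : PolyS k n m := monomial t.1 1

variable (d e) in
/-- The exponent of `x_i ^ d * y_j ^ e`. -/
def cornerExponent (p : Fin (n + 1) × Fin (m + 1)) : BidegreeExponent n m d e :=
  ⟨Finsupp.single (Sum.inl p.1) d + Finsupp.single (Sum.inr p.2) e, by
    simp [Finsupp.weight_single, wt]⟩

theorem bidegreeMonomial_cornerExponent (p : Fin (n + 1) × Fin (m + 1)) :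
    bidegreeMonomial k (cornerExponent d e p) = X (Sum.inl p.1) ^ d * X (Sum.inr p.2) ^ e := by
  rw [bidegreeMonomial, cornerExponent, X_pow_eq_monomial, X_pow_eq_monomial, monomial_mul,
    one_mul]

theorem bidegreeMonomial_cornerExponent_dvd (p : Fin (n + 1) × Fin (m + 1)) :
    bidegreeMonomial k (cornerExponent d e p) ∣ chartMonomial k p ^ (d + e) := by
  refine ⟨X (Sum.inl p.1) ^ e * X (Sum.inr p.2) ^ d, ?_⟩
  rw [bidegreeMonomial_cornerExponent, chartMonomial]
  ring

theorem exists_bidegreeMonomial_mul_X (hd : d ≠ 0) (he : e ≠ 0) (p : Fin (n + 1) × Fin (m + 1))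
    (v : Fin (n + 1) ⊕ Fin (m + 1)) :
    ∃ t : BidegreeExponent n m d e,
      bidegreeMonomial k t * X (Sum.inl p.1) =
        bidegreeMonomial k (cornerExponent d e p) * X v ∨
      bidegreeMonomial k t * X (Sum.inr p.2) =
        bidegreeMonomial k (cornerExponent d e p) * X v := by
  obtain ⟨d, rfl⟩ := Nat.exists_eq_add_one_of_ne_zero hd
  obtain ⟨e, rfl⟩ := Nat.exists_eq_add_one_of_ne_zero he
  rcases v with i | j
  · refine ⟨⟨Finsupp.single (Sum.inl p.1) d + Finsupp.single (Sum.inr p.2) (e + 1) +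
      Finsupp.single (Sum.inl i) 1, by simp [Finsupp.weight_single, wt, add_comm]⟩,
      .inl ?_⟩
    rw [bidegreeMonomial_cornerExponent, bidegreeMonomial, monomial_add_single,
      monomial_add_single, ← X_pow_eq_monomial]
    ring
  · refine ⟨⟨Finsupp.single (Sum.inl p.1) (d + 1) + Finsupp.single (Sum.inr p.2) e +
      Finsupp.single (Sum.inr j) 1, by simp [Finsupp.weight_single, wt, add_comm]⟩,
      .inr ?_⟩
    rw [bidegreeMonomial_cornerExponent, bidegreeMonomial, monomial_add_single,
      monomial_add_single, ← X_pow_eq_monomial]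
    ring

variable {k} {K : Type} [Field K] [Algebra k K]

theorem sum_coeff_smul_map_bidegreeMonomial {f : PolyS K n m}
    (hf : f ∈ grad K n m ((d : ℤ), (e : ℤ))) :
    ∑ t : BidegreeExponent n m d e,
      coeff t.1 f • map (algebraMap k K) (bidegreeMonomial k t) = f := by
  classical
  ext μ
  simp only [coeff_sum, bidegreeMonomial, map_monomial, map_one, coeff_smul, coeff_monomial,
    smul_eq_mul, mul_ite, mul_one, mul_zero]
  by_cases hμ : Finsupp.weight (wt n m) μ = ((d : ℤ), (e : ℤ))
  · rw [Finset.sum_eq_single_of_mem ⟨μ, hμ⟩ (Finset.mem_univ _)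
      fun t _ ht ↦ if_neg fun h ↦ ht (Subtype.ext h), if_pos rfl]
  · rw [Finset.sum_eq_zero fun t _ ↦ if_neg fun h : t.1 = μ ↦ hμ (h ▸ t.2)]
    exact (not_imp_comm.mp (@hf μ) hμ).symm

theorem sum_smul_map_bidegreeMonomial_mem_grad (u : BidegreeExponent n m d e → K) :
    ∑ t, u t • map (algebraMap k K) (bidegreeMonomial k t) ∈
      grad K n m ((d : ℤ), (e : ℤ)) := by
  refine Submodule.sum_smul_mem _ _ fun t _ ↦ ?_
  rw [bidegreeMonomial, map_monomial, map_one]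
  exact isWeightedHomogeneous_monomial _ _ _ t.2

theorem map_chartMonomial (p : Fin (n + 1) × Fin (m + 1)) :
    map (algebraMap k K) (chartMonomial k p) = chartMonomial K p := by
  simp [chartMonomial]

end Forms

section GeneralSection

variable {k : Type} [Field k] {n m d e : ℕ} {J : Ideal (PolyS k n m)}

theorem ker_quotientMkₐ : RingHom.ker (Ideal.Quotient.mkₐ k J) = J :=
  Ideal.mk_ker

theorem holdsGenerically_isRadical_satIdeal_sectionIdeal [CharZero k] (hJ : J.IsRadical) :
    HoldsGenerically k (BidegreeExponent n m d e) fun K _ _ u ↦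
      (satIdeal (sectionIdeal J (bidegreeMonomial k) u) (Birr K n m)).IsRadical := by
  have := (Ideal.isRadical_iff_quotient_reduced J).mp hJ
  have hchart (p : Fin (n + 1) × Fin (m + 1)) :
      HoldsGenerically k (BidegreeExponent n m d e) fun K _ _ u ↦
        IsReduced (Localization.Away (Ideal.Quotient.mk
          (sectionIdeal (RingHom.ker (Ideal.Quotient.mkₐ k J)) (bidegreeMonomial k) u)
          (map (algebraMap k K) (chartMonomial k p)))) :=
    exists_ne_zero_forall_isReduced_away_quotient_sectionIdeal
      (Ideal.Quotient.mkₐ_surjective k J) (bidegreeMonomial_cornerExponent_dvd k p)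
  refine (HoldsGenerically.forall hchart).mono fun K _ _ u h ↦ isRadical_satIdeal_birr fun p ↦ ?_
  have := h p
  rwa [ker_quotientMkₐ, map_chartMonomial] at this

theorem holdsGenerically_ringKrullDim_quotient_sectionIdeal_le (hJ : J.IsRadical)
    (hsat : satIdeal J (Birr k n m) = J) {s : ℕ}
    (hdim : ringKrullDim (PolyS k n m ⧸ J) ≤ (s + 1 : ℕ)) :
    HoldsGenerically k (BidegreeExponent n m d e) fun K _ _ u ↦
      ringKrullDim (PolyS K n m ⧸ sectionIdeal J (bidegreeMonomial k) u) ≤ s := by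
  have := (Ideal.isRadical_iff_quotient_reduced J).mp hJ
  have hregular (c : PolyS k n m ⧸ J)
      (hc : ∀ t : BidegreeExponent n m d e,
        Ideal.Quotient.mkₐ k J (bidegreeMonomial k t) * c = 0) : c = 0 := by
    obtain ⟨g, rfl⟩ := Ideal.Quotient.mk_surjective c
    rw [Ideal.Quotient.eq_zero_iff_mem, ← hsat, mem_satIdeal_birr_iff]
    refine fun p ↦ ⟨d + e, J.mem_of_dvd
      (mul_dvd_mul_right (bidegreeMonomial_cornerExponent_dvd k p) g) ?_⟩
    rw [← Ideal.Quotient.eq_zero_iff_mem, map_mul]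
    exact hc _
  have h := exists_ne_zero_forall_ringKrullDim_quotient_sectionIdeal_le
    (Ideal.Quotient.mkₐ_surjective k J) hregular hdim
  rwa [ker_quotientMkₐ] at h

theorem exists_algebraicIndependent_away_chartMonomial (hsat : satIdeal J (Birr k n m) = J)
    {s : ℕ} (hdim : ringKrullDim (PolyS k n m ⧸ J) = s) :
    ∃ (p : Fin (n + 1) × Fin (m + 1))
      (z : Fin s → Localization.Away (Ideal.Quotient.mkₐ k J (chartMonomial k p))),
      AlgebraicIndependent k z := by
  have : Nontrivial (PolyS k n m ⧸ J) := by
    by_contra h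
    rw [not_nontrivial_iff_subsingleton] at h
    simp [ringKrullDim_eq_bot_of_subsingleton] at hdim
  obtain ⟨s', x, hx, -, hs'⟩ := exists_algebraicIndependent_isIntegral k (PolyS k n m ⧸ J)
  obtain rfl : s' = s := by exact_mod_cast hs'.symm.trans hdim
  have hregular (c : PolyS k n m ⧸ J)
      (hc : ∀ p, ∃ N : ℕ, Ideal.Quotient.mkₐ k J (chartMonomial k p) ^ N * c = 0) : c = 0 := by
    obtain ⟨g, rfl⟩ := Ideal.Quotient.mk_surjective c
    rw [Ideal.Quotient.eq_zero_iff_mem, ← hsat, mem_satIdeal_birr_iff]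
    refine fun p ↦ (hc p).imp fun N hN ↦ ?_
    rw [← Ideal.Quotient.eq_zero_iff_mem, map_mul, map_pow]
    exact hN
  obtain ⟨p, hp⟩ := exists_injective_algebraMap_away_comp
    (g := (aeval (R := k) x : MvPolynomial (Fin s') k →+* PolyS k n m ⧸ J)) hx hregular
  let toAway := IsScalarTower.toAlgHom k (PolyS k n m ⧸ J)
    (Localization.Away (Ideal.Quotient.mkₐ k J (chartMonomial k p)))
  refine ⟨p, toAway ∘ x, ?_⟩
  have hcomp : aeval (R := k) (toAway ∘ x) = toAway.comp (aeval x) :=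
    (comp_aeval x toAway).symm
  rw [AlgebraicIndependent, hcomp]
  exact hp

theorem holdsGenerically_le_ringKrullDim_quotient_satIdeal_sectionIdeal (hd : d ≠ 0) (he : e ≠ 0)
    (hsat : satIdeal J (Birr k n m) = J) {δ : ℕ} (hδ : 1 ≤ δ)
    (hdim : ringKrullDim (PolyS k n m ⧸ J) = (δ + 2 : ℕ)) :
    HoldsGenerically k (BidegreeExponent n m d e) fun K _ _ u ↦ (δ + 1 : ℕ) ≤ ringKrullDim
      (PolyS K n m ⧸ satIdeal (sectionIdeal J (bidegreeMonomial k) u) (Birr K n m)) := by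
  obtain ⟨p, z, hz⟩ := exists_algebraicIndependent_away_chartMonomial hsat hdim
  have hchart : HoldsGenerically k (BidegreeExponent n m d e) fun K _ _ u ↦
      (δ + 1 : ℕ) ≤ ringKrullDim (Localization.Away (Ideal.Quotient.mk
        (sectionIdeal (RingHom.ker (Ideal.Quotient.mkₐ k J)) (bidegreeMonomial k) u)
        (map (algebraMap k K) (chartMonomial k p)))) :=
    exists_ne_zero_forall_le_ringKrullDim_away_quotient_sectionIdeal
      (Ideal.Quotient.mkₐ_surjective k J) (bidegreeMonomial_cornerExponent_dvd k p)
      (exists_bidegreeMonomial_mul_X k hd he p) hδ hz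
  refine hchart.mono fun K _ _ u h ↦ ?_
  rw [ker_quotientMkₐ, map_chartMonomial] at h
  exact h.trans (ringKrullDim_away_le_ringKrullDim_quotient_satIdeal_birr _ p)

theorem satIdeal_sectionIdeal_eq_top {G : Set (PolyS k n m)}
    (hG : ∀ g ∈ G, ∃ γ, g ∈ grad k n m γ) {K : Type} [Field K] [Algebra k K]
    {u : BidegreeExponent n m d e → K}
    (hdim : ringKrullDim
      (PolyS K n m ⧸ sectionIdeal (Ideal.span G) (bidegreeMonomial k) u) ≤ (1 : ℕ)) :
    satIdeal (sectionIdeal (Ideal.span G) (bidegreeMonomial k) u) (Birr K n m) = ⊤ := by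
  rw [sectionIdeal, Ideal.map_span, ← Ideal.span_union] at hdim ⊢
  refine satIdeal_birr_eq_top_of_ringKrullDim_quotient_le_one ?_ hdim
  rintro _ (⟨g, hg, rfl⟩ | rfl)
  · obtain ⟨γ, hγ⟩ := hG g hg
    refine ⟨γ, fun μ hμ ↦ hγ fun h ↦ hμ ?_⟩
    rw [coeff_map, h, map_zero]
  · exact ⟨_, sum_smul_map_bidegreeMonomial_mem_grad u⟩

theorem sectionIdeal_coeff {K : Type} [Field K] [Algebra k K] {f : PolyS K n m}
    (hf : f ∈ grad K n m ((d : ℤ), (e : ℤ))) :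
    sectionIdeal J (bidegreeMonomial k) (fun t : BidegreeExponent n m d e ↦ coeff t.1 f) =
      J.map (map (algebraMap k K)) ⊔ Ideal.span {f} := by
  rw [sectionIdeal, sum_coeff_smul_map_bidegreeMonomial hf]

theorem HoldsGenerically.exists_form
    {P : ∀ (K : Type) [Field K] [Algebra k K], Ideal (PolyS K n m) → Prop}
    (h : HoldsGenerically k (BidegreeExponent n m d e) fun K _ _ u ↦
      P K (sectionIdeal J (bidegreeMonomial k) u)) :
    ∃ F : MvPolynomial (Fin (n + 1) ⊕ Fin (m + 1) →₀ ℕ) k, F ≠ 0 ∧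
      (∀ μ ∈ F.vars, Finsupp.weight (wt n m) μ = ((d : ℤ), (e : ℤ))) ∧
      ∀ (K : Type) [Field K] [Algebra k K], ∀ f ∈ grad K n m ((d : ℤ), (e : ℤ)),
        aeval (fun μ ↦ coeff μ f) F ≠ (0 : K) → ∀ I : Ideal (PolyS K n m),
          I = J.map (map (algebraMap k K)) ⊔ Ideal.span {f} → P K I := by
  classical
  obtain ⟨F, hF, h⟩ := h
  refine ⟨rename Subtype.val F, ?_, fun μ hμ ↦ ?_, fun K _ _ f hf hfF I hI ↦ ?_⟩
  · rwa [map_ne_zero_iff _ (rename_injective _ Subtype.val_injective)]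
  · obtain ⟨t, -, rfl⟩ := Finset.mem_image.mp (vars_rename _ _ hμ)
    exact t.2
  · rw [aeval_rename] at hfF
    rw [hI, ← sectionIdeal_coeff hf]
    exact h K _ hfF

end GeneralSection

theorem stmt15 (k : Type) [Field k] [CharZero k] (n m : ℕ) (d e : ℕ) (hd : d ≠ 0) (he : e ≠ 0)
    -- `V ⊂ ℙⁿ_k × ℙᵐ_k` a reduced closed subscheme, given by its bihomogeneous,
    -- `B`-saturated, radical ideal `J`, with `dim V = δ`
    (J : Ideal (PolyS k n m))
    (hhom : ∃ G : Set (PolyS k n m), (∀ g ∈ G, ∃ γ : ℤ × ℤ, g ∈ grad k n m γ) ∧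
      J = Ideal.span G)
    (hsat : satIdeal J (Birr k n m) = J) (hrad : J.radical = J)
    (δ : ℕ) (hdim : ringKrullDim ((PolyS k n m) ⧸ J) = ((δ + 2 : ℕ) : WithBot ℕ∞)) :
    -- there is a nonempty open `Ω ⊂ Spec k[U_{α,β}]`, the complement of the zero locus of
    -- a nonzero polynomial `F` in the indeterminate coefficients `U_{α,β}` of a form of
    -- bidegree `(d,e)`, …
    ∃ F : MvPolynomial ((Fin (n + 1) ⊕ Fin (m + 1)) →₀ ℕ) k,
      F ≠ 0 ∧
      (∀ μ ∈ F.vars, Finsupp.weight (wt n m) μ = ((d : ℤ), (e : ℤ))) ∧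
      -- … such that for every point `p ∈ Ω`, with residue field `K = k_p` and
      -- corresponding form `f = f_p` of bidegree `(d,e)`:
      ∀ (K : Type) [Field K] [Algebra k K],
        ∀ f : MvPolynomial (Fin (n + 1) ⊕ Fin (m + 1)) K,
          f ∈ grad K n m ((d : ℤ), (e : ℤ)) →
          MvPolynomial.aeval (fun μ => MvPolynomial.coeff μ f) F ≠ (0 : K) →
          ∀ IK : Ideal (PolyS K n m),
            IK = J.map (MvPolynomial.map (algebraMap k K)) ⊔ Ideal.span {f} →
            -- if `dim V = 0` then `V ∩ Z(f_p) = ∅` …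
            (δ = 0 → satIdeal IK (Birr K n m) = ⊤) ∧
            -- … and otherwise `V ∩ Z(f_p) ⊆ ℙⁿ_{k_p} × ℙᵐ_{k_p}` is reduced of
            -- dimension `dim V − 1`
            (δ ≠ 0 →
              (satIdeal IK (Birr K n m)).radical = satIdeal IK (Birr K n m) ∧
              ringKrullDim ((PolyS K n m) ⧸ satIdeal IK (Birr K n m)) =
                ((δ + 1 : ℕ) : WithBot ℕ∞)) := by
  obtain ⟨G, hG, rfl⟩ := hhom
  have hJ : (Ideal.span G).IsRadical := hrad ▸ Ideal.radical_isRadical _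
  have hupper := holdsGenerically_ringKrullDim_quotient_sectionIdeal_le (d := d) (e := e)
    hJ hsat (s := δ + 1) hdim.le
  apply HoldsGenerically.exists_form
  rcases Nat.eq_zero_or_pos δ with rfl | hδ
  · exact hupper.mono fun K _ _ u h ↦
      ⟨fun _ ↦ satIdeal_sectionIdeal_eq_top hG h, fun h₀ ↦ absurd rfl h₀⟩
  · have hreduced := holdsGenerically_isRadical_satIdeal_sectionIdeal (d := d) (e := e) hJ
    have hlower := holdsGenerically_le_ringKrullDim_quotient_satIdeal_sectionIdeal
      hd he hsat hδ hdim
    refine ((hreduced.and hupper).and hlower).mono fun K _ _ u ⟨⟨hrad, hle⟩, hge⟩ ↦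
      ⟨fun h₀ ↦ absurd h₀ hδ.ne', fun _ ↦ ⟨hrad.radical, le_antisymm ?_ hge⟩⟩
    exact (ringKrullDim_quotient_satIdeal_birr_le _).trans hle
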